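/- arXiv:1202.4539 — 3 statements merged into one kernel-verified Lean document; each statement's English description precedes it below -/
import Mathlib

section
/- For Lebesgue-almost every pair (θ_1, θ_2) ∈ ℝ² the following holds: for every pair (η_1, η_2) ∈ ℝ², liminf_{q → ∞, q ∈ ℤ_{>0}} q · ‖qθ_1 − η_1‖ · ‖qθ_2 − η_2‖ = 0. -/
open Filter MeasureTheory

/-- Distance from a real number to the nearest integer. -/
noncomputable def nint (x : ℝ) : ℝ := |x - round x|

namespace CubicField

theorem exists_cubic_root : ∃ a : ℝ, 1.24 < a ∧ a < 1.25 ∧ a ^ 3 + a ^ 2 - 2 * a - 1 = 0 := by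
  have hc : ContinuousOn (fun a : ℝ => a ^ 3 + a ^ 2 - 2 * a - 1) (Set.Icc 1.24 1.25) := by
    fun_prop
  obtain ⟨a, ha, h⟩ := intermediate_value_Ioo (by norm_num) hc
    (show (0 : ℝ) ∈ _ by constructor <;> norm_num)
  exact ⟨a, ha.1, ha.2, h⟩

/-- The positive root of `x ^ 3 + x ^ 2 - 2 * x - 1`. -/
noncomputable def posRoot : ℝ := exists_cubic_root.choose

theorem posRoot_gt : 1.24 < posRoot := exists_cubic_root.choose_spec.1
theorem posRoot_lt : posRoot < 1.25 := exists_cubic_root.choose_spec.2.1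
theorem posRoot_eq : posRoot ^ 3 + posRoot ^ 2 - 2 * posRoot - 1 = 0 :=
  exists_cubic_root.choose_spec.2.2

/-- The three conjugate roots of `x ^ 3 + x ^ 2 - 2 * x - 1`. -/
noncomputable def roots : Fin 3 → ℝ :=
  ![posRoot, posRoot ^ 2 - 2, 1 - posRoot - posRoot ^ 2]

theorem roots_cubic (i : Fin 3) : roots i ^ 3 = 1 + 2 * roots i - roots i ^ 2 := by
  have h := posRoot_eq
  fin_cases i <;> simp only [roots, Fin.zero_eta, Fin.mk_one, Fin.reduceFinMk, Matrix.cons_val] <;>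
    grind

theorem roots_succ (i : Fin 3) : roots (i + 1) = roots i ^ 2 - 2 := by
  have h := posRoot_eq
  fin_cases i <;> simp [roots] <;> grind

theorem roots_pow_four (i : Fin 3) : roots i ^ 4 = 3 * roots i ^ 2 - roots i - 1 := by
  linear_combination (roots i - 1) * roots_cubic i

theorem roots_zero_mem : 1.24 < roots 0 ∧ roots 0 < 1.25 := ⟨posRoot_gt, posRoot_lt⟩

theorem roots_one_mem : -0.4624 < roots 1 ∧ roots 1 < -0.4375 := by
  have h := roots_succ 0
  have h0 := roots_zero_mem
  norm_num at *
  constructor <;> nlinarith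

theorem roots_two_mem : -1.8125 < roots 2 ∧ roots 2 < -1.77 := by
  have h0 := roots_zero_mem
  have : roots 2 = 1 - roots 0 - roots 0 ^ 2 := by simp [roots]
  norm_num at *
  constructor <;> nlinarith

/-- The ring of integers of the cubic field, embedded in `ℝ ^ 3` by its conjugates. -/
noncomputable def ringO : Subring (Fin 3 → ℝ) where
  carrier := {v | ∃ n : Fin 3 → ℤ, ∀ i, v i = n 0 + n 1 * roots i + n 2 * roots i ^ 2}
  zero_mem' := ⟨0, by simp⟩
  one_mem' := ⟨![1, 0, 0], by simp⟩
  add_mem' := by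
    rintro v w ⟨n, hn⟩ ⟨m, hm⟩
    exact ⟨n + m, fun i => by simp [hn, hm]; ring⟩
  neg_mem' := by
    rintro v ⟨n, hn⟩
    exact ⟨-n, fun i => by simp [hn]; ring⟩
  mul_mem' := by
    rintro v w ⟨n, hn⟩ ⟨m, hm⟩
    refine ⟨![n 0 * m 0 + (n 1 * m 2 + n 2 * m 1) - n 2 * m 2,
      n 0 * m 1 + n 1 * m 0 + 2 * (n 1 * m 2 + n 2 * m 1) - n 2 * m 2,
      n 0 * m 2 + n 1 * m 1 + n 2 * m 0 - (n 1 * m 2 + n 2 * m 1) + 3 * (n 2 * m 2)], fun i => ?_⟩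
    simp [hn, hm]
    linear_combination ((n 1 : ℝ) * m 2 + n 2 * m 1) * roots_cubic i
      + ((n 2 : ℝ) * m 2) * roots_pow_four i

theorem mem_ringO {v : Fin 3 → ℝ} :
    v ∈ ringO ↔ ∃ n : Fin 3 → ℤ, ∀ i, v i = n 0 + n 1 * roots i + n 2 * roots i ^ 2 := Iff.rfl

theorem roots_mem : roots ∈ ringO := ⟨![0, 1, 0], by simp⟩

theorem shift_mem {v : Fin 3 → ℝ} (hv : v ∈ ringO) : (fun i => v (i + 1)) ∈ ringO := by
  obtain ⟨n, hn⟩ := hv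
  refine ⟨![n 0 - 2 * n 1 + 3 * n 2, -n 2, n 1 - n 2], fun i => ?_⟩
  simp [hn, roots_succ]
  linear_combination (n 2 : ℝ) * roots_pow_four i

theorem shift_two_mem {v : Fin 3 → ℝ} (hv : v ∈ ringO) : (fun i => v (i + 2)) ∈ ringO := by
  have := shift_mem (shift_mem hv)
  simpa [add_assoc] using this

/-- The norm form of the ring `ringO` in the basis of powers of a root. -/
def normForm (n : Fin 3 → ℤ) : ℤ :=
  n 0 ^ 3 - n 0 ^ 2 * n 1 + 5 * n 0 ^ 2 * n 2 - 2 * n 0 * n 1 ^ 2 - n 0 * n 1 * n 2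
    + 6 * n 0 * n 2 ^ 2 + n 1 ^ 3 - n 1 ^ 2 * n 2 - 2 * n 1 * n 2 ^ 2 + n 2 ^ 3

theorem roots_esymm_one : roots 0 + roots 1 + roots 2 = -1 := by
  simp [roots]; ring

theorem roots_esymm_three : roots 0 * roots 1 * roots 2 = 1 := by
  have h := posRoot_eq
  simp [roots]; grind

theorem roots_esymm_two : roots 0 * roots 1 + roots 0 * roots 2 + roots 1 * roots 2 = -2 := by
  have h := posRoot_eq
  simp [roots]; grind

theorem prod_eq_normForm {v : Fin 3 → ℝ} {n : Fin 3 → ℤ}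
    (hn : ∀ i, v i = n 0 + n 1 * roots i + n 2 * roots i ^ 2) :
    v 0 * v 1 * v 2 = normForm n := by
  have h1 := roots_esymm_one
  have h2 := roots_esymm_two
  have h3 := roots_esymm_three
  rw [hn 0, hn 1, hn 2]
  simp only [normForm]
  push_cast
  generalize roots 0 = a at *
  generalize roots 1 = b at *
  generalize roots 2 = c at *
  generalize (n 0 : ℝ) = x
  generalize (n 1 : ℝ) = y
  generalize (n 2 : ℝ) = z
  have key : (x + y * a + z * a ^ 2) * (x + y * b + z * b ^ 2) * (x + y * c + z * c ^ 2)
      = x ^ 3 + x ^ 2 * y * (a + b + c)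
        + x ^ 2 * z * ((a + b + c) ^ 2 - 2 * (a * b + a * c + b * c))
        + x * y ^ 2 * (a * b + a * c + b * c)
        + x * y * z * ((a + b + c) * (a * b + a * c + b * c) - 3 * (a * b * c))
        + x * z ^ 2 * ((a * b + a * c + b * c) ^ 2 - 2 * (a + b + c) * (a * b * c))
        + y ^ 3 * (a * b * c) + y ^ 2 * z * (a * b * c) * (a + b + c)
        + y * z ^ 2 * (a * b * c) * (a * b + a * c + b * c) + z ^ 3 * (a * b * c) ^ 2 := by
    ring
  rw [key, h1, h2, h3]
  ring

theorem even_of_normForm_eq_zero {n : Fin 3 → ℤ} (h : normForm n = 0) :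
    2 ∣ n 0 ∧ 2 ∣ n 1 ∧ 2 ∣ n 2 := by
  have key : ∀ x y z : ZMod 2, x ^ 3 - x ^ 2 * y + 5 * x ^ 2 * z - 2 * x * y ^ 2 - x * y * z
    + 6 * x * z ^ 2 + y ^ 3 - y ^ 2 * z - 2 * y * z ^ 2 + z ^ 3 = 0 → x = 0 ∧ y = 0 ∧ z = 0 := by
    decide
  have h' : ((normForm n : ℤ) : ZMod 2) = 0 := by rw [h]; simp
  simp only [normForm] at h'
  push_cast at h'
  obtain ⟨h0, h1, h2⟩ := key _ _ _ h'
  exact ⟨(ZMod.intCast_zmod_eq_zero_iff_dvd _ 2).1 h0, (ZMod.intCast_zmod_eq_zero_iff_dvd _ 2).1 h1,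
    (ZMod.intCast_zmod_eq_zero_iff_dvd _ 2).1 h2⟩

theorem normForm_eq_zero_aux (k : ℕ) : ∀ n : Fin 3 → ℤ,
    (n 0).natAbs + (n 1).natAbs + (n 2).natAbs ≤ k → normForm n = 0 → n = 0 := by
  induction k with
  | zero =>
    intro n hk _
    ext i
    fin_cases i <;> simp <;> omega
  | succ k ih =>
    intro n hk h
    obtain ⟨⟨x, hx⟩, ⟨y, hy⟩, ⟨z, hz⟩⟩ := even_of_normForm_eq_zero h
    have hN : normForm ![x, y, z] = 0 := by
      simp only [normForm, hx, hy, hz] at h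
      simp only [normForm, Matrix.cons_val]
      linarith
    by_cases h0 : (n 0).natAbs + (n 1).natAbs + (n 2).natAbs = 0
    · ext i
      fin_cases i <;> simp <;> omega
    · have := ih ![x, y, z] (by simp; omega) hN
      have e0 : x = 0 := congrFun this 0
      have e1 : y = 0 := congrFun this 1
      have e2 : z = 0 := congrFun this 2
      ext i
      fin_cases i <;> simp <;> omega

theorem eq_zero_of_normForm {n : Fin 3 → ℤ} (h : normForm n = 0) : n = 0 :=
  normForm_eq_zero_aux _ n le_rfl h

theorem coeff_eq_zero {v : Fin 3 → ℝ} {n : Fin 3 → ℤ}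
    (hn : ∀ i, v i = n 0 + n 1 * roots i + n 2 * roots i ^ 2) {i : Fin 3} (hi : v i = 0) :
    n = 0 := by
  apply eq_zero_of_normForm
  have h : v 0 * v 1 * v 2 = 0 := by fin_cases i <;> simp_all
  rw [prod_eq_normForm hn] at h
  exact_mod_cast h

theorem eq_zero_of_apply_eq_zero {v : Fin 3 → ℝ} (hv : v ∈ ringO) {i : Fin 3} (hi : v i = 0) :
    v = 0 := by
  obtain ⟨n, hn⟩ := hv
  have := coeff_eq_zero hn hi
  ext j
  simp [hn, this]

theorem eq_of_apply_eq {v w : Fin 3 → ℝ} (hv : v ∈ ringO) (hw : w ∈ ringO) {i : Fin 3}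
    (hi : v i = w i) : v = w :=
  sub_eq_zero.1 (eq_zero_of_apply_eq_zero (ringO.sub_mem hv hw) (i := i) (by simp [hi]))

theorem exists_mul_eq_intCast {v : Fin 3 → ℝ} (hv : v ∈ ringO) (h0 : v ≠ 0) :
    ∃ w ∈ ringO, ∃ N : ℕ, N ≠ 0 ∧ v * w = N := by
  obtain ⟨n, hn⟩ := hv
  have hv : v ∈ ringO := ⟨n, hn⟩
  have hp := prod_eq_normForm hn
  have hw : ((fun i => v (i + 1)) * fun i => v (i + 2)) ∈ ringO :=
    ringO.mul_mem (shift_mem hv) (shift_two_mem hv)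
  have hN : normForm n ≠ 0 := by
    intro h
    exact h0 (by ext j; simp [hn, eq_zero_of_normForm h])
  have hv' : v * ((fun i => v (i + 1)) * fun i => v (i + 2)) = ((normForm n : ℤ) : Fin 3 → ℝ) := by
    ext i
    fin_cases i <;> simp [← hp] <;> ring
  rcases Int.natAbs_eq (normForm n) with h | h
  · refine ⟨_, hw, (normForm n).natAbs, by simpa, ?_⟩
    rw [hv']; nth_rewrite 1 [h]; simp only [Int.cast_natCast]
  · refine ⟨_, ringO.neg_mem hw, (normForm n).natAbs, by simpa, ?_⟩
    rw [mul_neg, hv']; nth_rewrite 1 [h]; simp only [Int.cast_neg, Int.cast_natCast, neg_neg]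

end CubicField

namespace CubicField

theorem abs_roots_le (i : Fin 3) : |roots i| ≤ 2 := by
  have h0 := roots_zero_mem
  have h1 := roots_one_mem
  have h2 := roots_two_mem
  norm_num at *
  rw [abs_le]
  fin_cases i <;> simp <;> constructor <;> linarith

theorem roots_injective : Function.Injective roots := by
  have h0 := roots_zero_mem
  have h1 := roots_one_mem
  have h2 := roots_two_mem
  norm_num at *
  intro i j h
  fin_cases i <;> fin_cases j <;> simp at h ⊢ <;> linarith

theorem exists_real_coeff (v : Fin 3 → ℝ) :
    ∃ t : Fin 3 → ℝ, ∀ i, v i = t 0 + t 1 * roots i + t 2 * roots i ^ 2 := by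
  have hdet : IsUnit (Matrix.vandermonde roots).det :=
    isUnit_iff_ne_zero.2 (Matrix.det_vandermonde_ne_zero_iff.2 roots_injective)
  refine ⟨(Matrix.vandermonde roots)⁻¹.mulVec v, fun i => ?_⟩
  have h : (Matrix.vandermonde roots).mulVec ((Matrix.vandermonde roots)⁻¹.mulVec v) = v := by
    rw [Matrix.mulVec_mulVec, Matrix.mul_nonsing_inv _ hdet, Matrix.one_mulVec]
  conv_lhs => rw [← h]
  simp only [Matrix.mulVec, dotProduct, Matrix.vandermonde_apply, Fin.sum_univ_three]
  simp; ring

theorem exists_mem_ringO_near (v : Fin 3 → ℝ) : ∃ w ∈ ringO, ∀ i, |v i - w i| ≤ 4 := by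
  obtain ⟨t, ht⟩ := exists_real_coeff v
  refine ⟨fun i => round (t 0) + round (t 1) * roots i + round (t 2) * roots i ^ 2,
    ⟨fun j => round (t j), fun i => rfl⟩, fun i => ?_⟩
  rw [ht i]
  have e : t 0 + t 1 * roots i + t 2 * roots i ^ 2
      - (round (t 0) + round (t 1) * roots i + round (t 2) * roots i ^ 2)
      = (t 0 - round (t 0)) + (t 1 - round (t 1)) * roots i
        + (t 2 - round (t 2)) * roots i ^ 2 := by ring
  rw [e]
  have h0 := abs_sub_round (t 0)
  have h1 := abs_sub_round (t 1)
  have h2 := abs_sub_round (t 2)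
  have hr := abs_roots_le i
  calc _ ≤ |t 0 - round (t 0)| + |t 1 - round (t 1)| * |roots i|
        + |t 2 - round (t 2)| * |roots i| ^ 2 := by
        rw [← abs_pow, ← abs_mul, ← abs_mul]; exact abs_add_three _ _ _
    _ ≤ 1 / 2 + 1 / 2 * 2 + 1 / 2 * 2 ^ 2 := by gcongr
    _ ≤ 4 := by norm_num

/-- Totally positive units of norm one which are congruent to one modulo `t`. -/
structure IsUnitMod (t : ℕ) (p : Fin 3 → ℝ) : Prop where
  pos : ∀ i, 0 < p i
  prod_eq : p 0 * p 1 * p 2 = 1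
  mem : p ∈ ringO
  inv_mem : p⁻¹ ∈ ringO
  cong : ∃ w ∈ ringO, p = 1 + t * w

namespace IsUnitMod

variable {t : ℕ} {p q : Fin 3 → ℝ}

theorem mul_inv (hp : IsUnitMod t p) : p * p⁻¹ = 1 := by
  ext i; simp [(hp.pos i).ne']

theorem one (t : ℕ) : IsUnitMod t 1 :=
  ⟨by simp, by simp, ringO.one_mem, by simp, 0, ringO.zero_mem, by simp⟩

theorem mul (hp : IsUnitMod t p) (hq : IsUnitMod t q) : IsUnitMod t (p * q) := by
  obtain ⟨v, hv, rfl⟩ := hp.cong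
  obtain ⟨w, hw, rfl⟩ := hq.cong
  refine ⟨fun i => mul_pos (hp.pos i) (hq.pos i), ?_, ringO.mul_mem hp.mem hq.mem, ?_,
    v + w + t * (v * w), ?_, by ring⟩
  · have h1 := hp.prod_eq
    have h2 := hq.prod_eq
    calc _ = ((1 + t * v) 0 * (1 + t * v) 1 * (1 + t * v) 2) *
          ((1 + t * w) 0 * (1 + t * w) 1 * (1 + t * w) 2) := by simp only [Pi.mul_apply]; ring
      _ = 1 := by rw [h1, h2]; ring
  · rw [_root_.mul_inv]; exact ringO.mul_mem hp.inv_mem hq.inv_mem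
  · exact ringO.add_mem (ringO.add_mem hv hw)
      (ringO.mul_mem (natCast_mem ringO t) (ringO.mul_mem hv hw))

theorem inv (hp : IsUnitMod t p) : IsUnitMod t p⁻¹ := by
  have h := hp.mul_inv
  refine ⟨fun i => inv_pos.2 (hp.pos i), ?_, hp.inv_mem, by simpa using hp.mem, ?_⟩
  · have := hp.prod_eq
    simp only [Pi.inv_apply]
    rw [← _root_.mul_inv, ← _root_.mul_inv, this, inv_one]
  · obtain ⟨w, hw, hpw⟩ := hp.cong
    refine ⟨-(p⁻¹ * w), ringO.neg_mem (ringO.mul_mem hp.inv_mem hw), ?_⟩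
    have : p⁻¹ * p = p⁻¹ * (1 + t * w) := by rw [← hpw]
    linear_combination -this + h

theorem pow (hp : IsUnitMod t p) (n : ℕ) : IsUnitMod t (p ^ n) := by
  induction n with
  | zero => simpa using one t
  | succ n ih => rw [pow_succ]; exact ih.mul hp

theorem zpow (hp : IsUnitMod t p) (n : ℤ) : IsUnitMod t (p ^ n) := by
  cases n with
  | ofNat n => simpa using hp.pow n
  | negSucc n => rw [zpow_negSucc]; exact (hp.pow _).inv

theorem of_mem (hpos : ∀ i, 0 < p i) (hprod : p 0 * p 1 * p 2 = 1) (hp : p ∈ ringO)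
    (hinv : p⁻¹ ∈ ringO) : IsUnitMod 1 p :=
  ⟨hpos, hprod, hp, hinv, p - 1, ringO.sub_mem hp ringO.one_mem, by simp⟩

theorem to_one (hp : IsUnitMod t p) : IsUnitMod 1 p := of_mem hp.pos hp.prod_eq hp.mem hp.inv_mem

theorem exists_pow (hp : IsUnitMod 1 p) (ht : t ≠ 0) : ∃ m : ℕ, m ≠ 0 ∧ IsUnitMod t (p ^ m) := by
  have : NeZero t := ⟨ht⟩
  choose n hn using fun k : ℕ => mem_ringO.1 (hp.pow k).mem
  obtain ⟨i, j, hij, h⟩ := Finite.exists_ne_map_eq_of_infinite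
    (fun k : ℕ => fun l : Fin 3 => ((n k l : ℤ) : ZMod t))
  wlog hlt : i < j generalizing i j
  · exact this j i hij.symm h.symm (lt_of_le_of_ne (not_lt.1 hlt) hij.symm)
  refine ⟨j - i, by omega, (hp.pow _).pos, (hp.pow _).prod_eq, (hp.pow _).mem, (hp.pow _).inv_mem, ?_⟩
  have hd : ∀ l, ∃ m : ℤ, n j l = n i l + t * m := fun l => by
    obtain ⟨m, hm⟩ := (ZMod.intCast_eq_intCast_iff_dvd_sub _ _ _).1 (congrFun h l)
    exact ⟨m, by linarith⟩
  choose m hm using hd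
  refine ⟨(p ^ i)⁻¹ * fun l => m 0 + m 1 * roots l + m 2 * roots l ^ 2,
    ringO.mul_mem (hp.pow i).inv_mem ⟨m, fun l => rfl⟩, ?_⟩
  ext l
  have hl := (hp.pos l).ne'
  have h1 := hn i l
  have h2 := hn j l
  simp only [Pi.pow_apply] at h1 h2
  simp only [hm] at h2
  push_cast at h2
  have h3 : p l ^ j = p l ^ (j - i) * p l ^ i := by rw [← pow_add, Nat.sub_add_cancel hlt.le]
  have hi : p l ^ i ≠ 0 := pow_ne_zero _ hl
  simp only [Pi.pow_apply, Pi.add_apply, Pi.one_apply, Pi.mul_apply, Pi.natCast_apply, Pi.inv_apply]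
  field_simp
  linarith

end IsUnitMod

/-- A totally positive unit whose coordinate `i` is the only one exceeding one. -/
noncomputable def expUnit (i : Fin 3) : Fin 3 → ℝ := fun j => (1 + roots (j - i)) ^ 2

theorem one_add_roots_mul (i : Fin 3) : (1 + roots i) * (2 - roots i ^ 2) = 1 := by
  linear_combination -roots_cubic i

theorem isUnitMod_expUnit_zero : IsUnitMod 1 (expUnit 0) := by
  have hinv : (expUnit 0)⁻¹ = (2 - roots ^ 2) ^ 2 := by
    ext i
    simp only [expUnit, Pi.inv_apply, sub_zero, Pi.pow_apply, Pi.sub_apply, Pi.ofNat_apply]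
    rw [inv_eq_iff_eq_inv, ← inv_pow, ← eq_inv_of_mul_eq_one_left (one_add_roots_mul i)]
  have h : expUnit 0 = (1 + roots) ^ 2 := by ext i; simp [expUnit]
  refine IsUnitMod.of_mem (fun i => ?_) ?_ ?_ ?_
  · have : 1 + roots i ≠ 0 := left_ne_zero_of_mul_eq_one (one_add_roots_mul i)
    simp only [expUnit, sub_zero]; positivity
  · have h1 := roots_esymm_one
    have h2 := roots_esymm_two
    have h3 := roots_esymm_three
    have : (1 + roots 0) * (1 + roots 1) * (1 + roots 2) = -1 := by linarith
    simp only [expUnit, sub_zero]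
    rw [← mul_pow, ← mul_pow, this]; norm_num
  · rw [h]; exact pow_mem (ringO.add_mem ringO.one_mem roots_mem) 2
  · rw [hinv]
    exact pow_mem (ringO.sub_mem (by exact_mod_cast natCast_mem ringO 2) (pow_mem roots_mem 2)) 2

theorem IsUnitMod.shift {p : Fin 3 → ℝ} (hp : IsUnitMod 1 p) :
    IsUnitMod 1 (fun i => p (i + 1)) := by
  refine of_mem (fun i => hp.pos _) ?_ (shift_mem hp.mem) (shift_mem hp.inv_mem)
  have := hp.prod_eq
  simp only [zero_add, Fin.reduceAdd]
  linarith

theorem isUnitMod_expUnit (i : Fin 3) : IsUnitMod 1 (expUnit i) := by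
  fin_cases i
  · exact isUnitMod_expUnit_zero
  · convert isUnitMod_expUnit_zero.shift.shift using 1
    ext j
    simp only [expUnit]; fin_cases j <;> rfl
  · convert isUnitMod_expUnit_zero.shift using 1
    ext j
    simp only [expUnit]; fin_cases j <;> rfl

theorem one_lt_expUnit_self (i : Fin 3) : 1 < expUnit i i := by
  have := roots_zero_mem
  norm_num at this
  simp only [expUnit, sub_self]; nlinarith

theorem expUnit_lt_one {i j : Fin 3} (h : j ≠ i) : expUnit i j < 1 := by
  have h1 := roots_one_mem
  have h2 := roots_two_mem
  norm_num at h1 h2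
  have key : roots (j - i) < 0 ∧ -2 < roots (j - i) := by
    have : j - i ≠ 0 := sub_ne_zero.2 h
    generalize j - i = k at *
    fin_cases k
    · exact absurd rfl this
    · simp only [Fin.mk_one]; constructor <;> linarith
    · simp only [Fin.reduceFinMk]; constructor <;> linarith
  simp only [expUnit]; nlinarith [key.1, key.2]

end CubicField

namespace CubicField

theorem exists_expUnit_pow_lt (i : Fin 3) {δ : ℝ} (hδ : 0 < δ) :
    ∃ n : ℕ, n ≠ 0 ∧ ∀ j ≠ i, expUnit i j ^ n < δ := by
  have h : ∀ j, ∀ᶠ n : ℕ in atTop, j ≠ i → expUnit i j ^ n < δ := by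
    intro j
    by_cases hj : j = i
    · simp [hj]
    · have := tendsto_pow_atTop_nhds_zero_of_lt_one ((isUnitMod_expUnit i).pos j).le
        (expUnit_lt_one hj)
      filter_upwards [this.eventually_lt_const hδ] with n hn _ using hn
  obtain ⟨n, hn, hn0⟩ := ((eventually_all.2 h).and (eventually_ne_atTop 0)).exists
  exact ⟨n, hn0, hn⟩

/-- Projections of the ring along a coordinate axis are dense, even in a half-space. -/
theorem exists_mem_ringO_approx (i : Fin 3) {s : ℝ} (hs : s * s = 1) (r : Fin 3 → ℝ) {δ : ℝ}
    (hδ : 0 < δ) : ∃ z ∈ ringO, (∀ j ≠ i, |z j - r j| < δ) ∧ 0 < s * (r i - z i) := by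
  obtain ⟨n, -, hn⟩ := exists_expUnit_pow_lt i (div_pos hδ (by norm_num : (0 : ℝ) < 5))
  have hu := (isUnitMod_expUnit i).pow n
  set u := expUnit i ^ n with hu_def
  obtain ⟨z, hz, hzr⟩ := exists_mem_ringO_near (u⁻¹ * r - Pi.single i (s * 5))
  refine ⟨u * z, ringO.mul_mem hu.mem hz, fun j hj => ?_, ?_⟩
  · have h := hzr j
    simp only [Pi.sub_apply, Pi.mul_apply, Pi.inv_apply, Pi.single_eq_of_ne hj, sub_zero] at h
    have hpos := hu.pos j
    have hlt : u j < δ / 5 := hn j hj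
    calc |(u * z) j - r j| = u j * |(u j)⁻¹ * r j - z j| := by
          rw [← abs_of_pos hpos, ← abs_mul, abs_of_pos hpos, abs_sub_comm, mul_sub]
          congr 1
          rw [Pi.mul_apply]; field_simp
      _ ≤ u j * 4 := by gcongr
      _ < δ := by linarith
  · have h := hzr i
    simp only [Pi.sub_apply, Pi.mul_apply, Pi.inv_apply, Pi.single_eq_same] at h
    have hpos := hu.pos i
    have hs1 : |s| = 1 := by
      rw [← sq_eq_sq₀ (abs_nonneg _) zero_le_one, sq_abs]; linarith
    have h2 : s * (r i - (u * z) i) = u i * (5 + s * ((u i)⁻¹ * r i - s * 5 - z i)) := by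
      rw [Pi.mul_apply]
      field_simp
      linear_combination (5 * u i) * hs
    rw [h2]
    have h3 := neg_abs_le (s * ((u i)⁻¹ * r i - s * 5 - z i))
    rw [abs_mul, hs1, one_mul] at h3
    exact mul_pos hpos (by linarith)

theorem exists_unit_apply_near {t : ℕ} (ht : t ≠ 0) (i : Fin 3) {x y δ : ℝ} (hx : 0 < x)
    (hy : 0 < y) (hδ : 0 < δ) : ∃ p, IsUnitMod t p ∧ |p i * x - y| < δ := by
  let D : AddSubgroup ℝ :=
    { carrier := {l | ∃ p, IsUnitMod t p ∧ Real.log (p i) = l}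
      zero_mem' := ⟨1, IsUnitMod.one t, by simp⟩
      add_mem' := by
        rintro _ _ ⟨p, hp, rfl⟩ ⟨q, hq, rfl⟩
        exact ⟨p * q, hp.mul hq, Real.log_mul (hp.pos i).ne' (hq.pos i).ne'⟩
      neg_mem' := by
        rintro _ ⟨p, hp, rfl⟩
        exact ⟨p⁻¹, hp.inv, Real.log_inv _⟩ }
  have hD : Dense (D : Set ℝ) := by
    rcases D.dense_or_cyclic with h | ⟨g, hg⟩
    · exact h
    exfalso
    obtain ⟨m, hm, hP⟩ := (isUnitMod_expUnit i).exists_pow ht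
    obtain ⟨m', hm', hR⟩ := (isUnitMod_expUnit (i + 1)).exists_pow ht
    have hi1 : i ≠ i + 1 := by fin_cases i <;> decide
    have hi2 : i + 2 ≠ i := by fin_cases i <;> decide
    have hi3 : i + 2 ≠ i + 1 := by fin_cases i <;> decide
    have hPi : 1 < (expUnit i ^ m) i := one_lt_pow₀ (one_lt_expUnit_self i) hm
    have hPk : (expUnit i ^ m) (i + 2) < 1 :=
      pow_lt_one₀ ((isUnitMod_expUnit i).pos _).le (expUnit_lt_one hi2) hm
    have hRi : (expUnit (i + 1) ^ m') i < 1 :=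
      pow_lt_one₀ ((isUnitMod_expUnit _).pos _).le (expUnit_lt_one hi1) hm'
    have hRk : (expUnit (i + 1) ^ m') (i + 2) < 1 :=
      pow_lt_one₀ ((isUnitMod_expUnit _).pos _).le (expUnit_lt_one hi3) hm'
    set P := expUnit i ^ m
    set R := expUnit (i + 1) ^ m'
    have hPD : Real.log (P i) ∈ D := ⟨P, hP, rfl⟩
    have hRD : Real.log (R i) ∈ D := ⟨R, hR, rfl⟩
    rw [hg, AddSubgroup.mem_closure_singleton] at hPD hRD
    obtain ⟨a, ha⟩ := hPD
    obtain ⟨b, hb⟩ := hRD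
    have hPl := Real.log_pos hPi
    have hRl := Real.log_neg (hR.pos i) hRi
    have hPkl := Real.log_neg (hP.pos _) hPk
    have hRkl := Real.log_neg (hR.pos _) hRk
    have heq : P ^ b = R ^ a := by
      refine eq_of_apply_eq (hP.zpow b).mem (hR.zpow a).mem (i := i) ?_
      apply Real.log_injOn_pos ((hP.zpow b).pos i) ((hR.zpow a).pos i)
      simp only [Pi.pow_apply, Real.log_zpow, ← ha, ← hb]
      simp; ring
    have hk := congrArg Real.log (congrFun heq (i + 2))
    simp only [Pi.pow_apply, Real.log_zpow] at hk
    simp only [zsmul_eq_mul] at ha hb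
    rw [← ha] at hPl
    rw [← hb] at hRl
    have hab : (a : ℝ) * b < 0 := by nlinarith [mul_neg_of_pos_of_neg hPl hRl, sq_nonneg g]
    rcases lt_trichotomy (a : ℝ) 0 with h | h | h
    · have : 0 < (b : ℝ) := by nlinarith
      nlinarith
    · simp [h] at hab
    · have : (b : ℝ) < 0 := by nlinarith
      nlinarith
  have hopen : IsOpen {l : ℝ | |Real.exp l * x - y| < δ} :=
    isOpen_lt (by fun_prop) continuous_const
  obtain ⟨l, ⟨p, hp, rfl⟩, hl⟩ := hD.exists_mem_open hopen ⟨Real.log (y / x), by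
    change |Real.exp (Real.log (y / x)) * x - y| < δ
    rw [Real.exp_log (div_pos hy hx)]
    field_simp
    simpa using hδ⟩
  exact ⟨p, hp, by simpa [Real.exp_log (hp.pos i)] using hl⟩

/-- Closed sets periodic under the ring and invariant under the units congruent to one. -/
structure IsInvariant (t : ℕ) (E : Set (Fin 3 → ℝ)) : Prop where
  closed : IsClosed E
  add_mem : ∀ {v w}, v ∈ E → w ∈ ringO → v + w ∈ E
  mul_mem : ∀ {p v}, IsUnitMod t p → v ∈ E → p * v ∈ E

theorem IsClosed.mem_of_forall_near {E : Set (Fin 3 → ℝ)} (hE : IsClosed E) {v : Fin 3 → ℝ}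
    (h : ∀ δ > 0, ∃ w ∈ E, ∀ i, |v i - w i| < δ) : v ∈ E := by
  rw [← hE.closure_eq, Metric.mem_closure_iff]
  intro δ hδ
  obtain ⟨w, hw, hvw⟩ := h δ hδ
  exact ⟨w, hw, (dist_pi_lt_iff hδ).2 hvw⟩

theorem IsInvariant.eq_univ_of_single {t : ℕ} (ht : t ≠ 0) {E : Set (Fin 3 → ℝ)}
    (hE : IsInvariant t E) (i : Fin 3) {s : ℝ} (hs : s * s = 1) {x : ℝ} (hx : 0 < x)
    (hmem : Pi.single i (s * x) ∈ E) : E = Set.univ := by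
  have hall : ∀ y : ℝ, 0 < y → Pi.single i (s * y) ∈ E := by
    intro y hy
    refine IsClosed.mem_of_forall_near hE.closed fun δ hδ => ?_
    obtain ⟨p, hp, hpy⟩ := exists_unit_apply_near ht i hx hy hδ
    refine ⟨_, hE.mul_mem hp hmem, fun j => ?_⟩
    by_cases hj : j = i
    · subst hj
      have hs1 : |s| = 1 := by
        rw [← sq_eq_sq₀ (abs_nonneg _) zero_le_one, sq_abs]; linarith
      rw [Pi.mul_apply, Pi.single_eq_same, Pi.single_eq_same,
        show s * y - p j * (s * x) = s * (y - p j * x) by ring, abs_mul, hs1, one_mul,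
        abs_sub_comm]
      exact hpy
    · simp [Pi.single_eq_of_ne hj, hδ]
  refine Set.eq_univ_of_forall fun r => IsClosed.mem_of_forall_near hE.closed fun δ hδ => ?_
  obtain ⟨z, hz, hzr, hpos⟩ := exists_mem_ringO_approx i hs r hδ
  refine ⟨_, hE.add_mem (hall _ hpos) hz, fun j => ?_⟩
  by_cases hj : j = i
  · subst hj
    rw [Pi.add_apply, Pi.single_eq_same, ← mul_assoc, hs]
    simpa using hδ
  · rw [Pi.add_apply, Pi.single_eq_of_ne hj, zero_add, abs_sub_comm]
    exact hzr j hj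

end CubicField

namespace CubicField

variable {t : ℕ} {E B : Set (Fin 3 → ℝ)}

theorem exists_dominant_coord (h : ∀ δ > 0, ∃ v ∈ E, v ≠ 0 ∧ ∀ i, |v i| < δ) :
    ∃ (i : Fin 3) (s : ℝ), s * s = 1 ∧ ∀ δ > 0, ∃ v ∈ E, 0 < s * v i ∧ s * v i < δ ∧
      ∀ j, |v j| ≤ s * v i := by
  by_contra! hcon
  have hev : ∀ (i : Fin 3) (b : Bool), ∀ᶠ δ in nhdsWithin (0 : ℝ) (Set.Ioi 0), ∀ v ∈ E,
      0 < (if b then 1 else -1) * v i → (if b then 1 else -1) * v i < δ →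
      ∃ j, (if b then 1 else -1) * v i < |v j| := by
    intro i b
    obtain ⟨δ, hδ, hv⟩ := hcon i (if b then 1 else -1) (by cases b <;> simp)
    filter_upwards [Ioo_mem_nhdsGT hδ] with δ' hδ' v hvE hpos hlt
    exact hv v hvE hpos (hlt.trans hδ'.2)
  obtain ⟨δ, hδ', hδ⟩ := ((eventually_all.2 fun i => eventually_all.2 (hev i)).and
    self_mem_nhdsWithin).exists
  obtain ⟨v, hvE, hv0, hv⟩ := h δ hδ
  obtain ⟨i, -, hi⟩ := Finset.exists_max_image Finset.univ (fun i => |v i|) Finset.univ_nonempty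
  have hvi : v i ≠ 0 := by
    intro h0
    apply hv0
    ext j
    have := hi j (Finset.mem_univ _)
    simpa [h0] using this
  rcases lt_or_gt_of_ne hvi with hneg | hpos
  · obtain ⟨j, hj⟩ := hδ' i false v hvE (by simpa using hneg)
      (by simpa [abs_of_neg hneg] using hv i)
    have := hi j (Finset.mem_univ _)
    rw [abs_of_neg hneg] at this
    simp at hj
    linarith
  · obtain ⟨j, hj⟩ := hδ' i true v hvE (by simpa using hpos)
      (by simpa [abs_of_pos hpos] using hv i)
    have := hi j (Finset.mem_univ _)
    rw [abs_of_pos hpos] at this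
    simp at hj
    linarith

theorem IsInvariant.eq_univ_of_small (ht : t ≠ 0) (hE : IsInvariant t E)
    (h : ∀ δ > 0, ∃ v ∈ E, v ≠ 0 ∧ ∀ i, |v i| < δ) : E = Set.univ := by
  obtain ⟨i, s, hs, hsmall⟩ := exists_dominant_coord h
  obtain ⟨m, hm, hP⟩ := (isUnitMod_expUnit i).exists_pow ht
  have hPi : 1 < (expUnit i ^ m) i := one_lt_pow₀ (one_lt_expUnit_self i) hm
  have hPj : ∀ j ≠ i, (expUnit i ^ m) j < 1 := fun j hj =>
    pow_lt_one₀ ((isUnitMod_expUnit i).pos _).le (expUnit_lt_one hj) hm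
  set P := expUnit i ^ m
  have hexp : ∀ n : ℕ, ∃ e ∈ E, s * e i ∈ Set.Icc (P i)⁻¹ 1 ∧
      ∀ j ≠ i, |e j| < 1 / ((n : ℝ) + 1) := by
    intro n
    obtain ⟨v, hvE, hpos, hlt, hdom⟩ := hsmall (1 / ((n : ℝ) + 1)) (by positivity)
    have h1 : 1 ≤ (s * v i)⁻¹ := by
      rw [one_le_inv₀ hpos]
      refine hlt.le.trans ?_
      rw [div_le_one (by positivity)]
      linarith [n.cast_nonneg (α := ℝ)]
    obtain ⟨k, hk1, hk2⟩ := exists_nat_pow_near h1 hPi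
    refine ⟨P ^ k * v, hE.mul_mem (hP.pow k) hvE, ⟨?_, ?_⟩, fun j hj => ?_⟩
    · rw [Pi.mul_apply, Pi.pow_apply, inv_le_iff_one_le_mul₀' (hP.pos i)]
      rw [inv_lt_iff_one_lt_mul₀ hpos, pow_succ] at hk2
      linarith
    · have := mul_le_mul_of_nonneg_right hk1 hpos.le
      rw [inv_mul_cancel₀ hpos.ne'] at this
      rw [Pi.mul_apply, Pi.pow_apply]
      linarith
    · rw [Pi.mul_apply, Pi.pow_apply, abs_mul, abs_of_pos (pow_pos (hP.pos j) k)]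
      calc _ ≤ 1 * |v j| := by
            gcongr
            exact pow_le_one₀ (hP.pos j).le (hPj j hj).le
        _ ≤ s * v i := by rw [one_mul]; exact hdom j
        _ < _ := hlt
  choose e heE hei hej using hexp
  obtain ⟨x, hx, φ, hφ, hlim⟩ := isCompact_Icc.tendsto_subseq hei
  have hx0 : 0 < x := (inv_pos.2 (hP.pos i)).trans_le hx.1
  refine hE.eq_univ_of_single ht i hs hx0 (IsClosed.mem_of_forall_near hE.closed fun δ hδ => ?_)
  have h1 := (Metric.tendsto_atTop.1 hlim) δ hδ
  obtain ⟨N, hN⟩ := h1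
  obtain ⟨M, hM⟩ := exists_nat_one_div_lt hδ
  have hs1 : |s| = 1 := by
    rw [← sq_eq_sq₀ (abs_nonneg _) zero_le_one, sq_abs]; linarith
  refine ⟨e (φ (max N M)), heE _, fun j => ?_⟩
  by_cases hj : j = i
  · subst hj
    have h2 := hN (max N M) (le_max_left _ _)
    rw [Real.dist_eq, Function.comp_apply] at h2
    rw [Pi.single_eq_same, abs_sub_comm,
      show e (φ (max N M)) j - s * x = s * (s * e (φ (max N M)) j - x) by
        linear_combination (-e (φ (max N M)) j) * hs, abs_mul, hs1, one_mul]
    exact h2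
  · rw [Pi.single_eq_of_ne hj, zero_sub, abs_neg]
    refine (hej _ j hj).trans (lt_of_le_of_lt ?_ hM)
    have : (M : ℝ) ≤ φ (max N M) := by
      exact_mod_cast (le_max_right N M).trans (hφ.id_le _)
    gcongr

theorem exists_sub_mem_box (v : Fin 3 → ℝ) :
    ∃ w ∈ ringO, v - w ∈ Set.Icc (fun _ => -4 : Fin 3 → ℝ) (fun _ => 4) := by
  obtain ⟨w, hw, h⟩ := exists_mem_ringO_near v
  exact ⟨w, hw, fun i => (abs_le.1 (h i)).1, fun i => (abs_le.1 (h i)).2⟩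

theorem IsInvariant.sub_mem (hE : IsInvariant t E) {v w : Fin 3 → ℝ} (hv : v ∈ E)
    (hw : w ∈ ringO) : v - w ∈ E := by
  rw [sub_eq_add_neg]; exact hE.add_mem hv (ringO.neg_mem hw)

theorem IsInvariant.difference (hB : IsInvariant t B) :
    IsInvariant t {d | ∃ v ∈ B, ∃ w ∈ B, d = v - w} := by
  refine ⟨?_, ?_, ?_⟩
  · have hK : IsCompact (B ∩ Set.Icc (fun _ => -4 : Fin 3 → ℝ) (fun _ => 4)) :=
      isCompact_Icc.inter_left hB.closed
    have hcl := (hB.closed.preimage continuous_neg).add_left_of_isCompact hK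
    convert hcl using 1
    ext d
    constructor
    · rintro ⟨v, hv, w, hw, rfl⟩
      obtain ⟨z, hz, hbox⟩ := exists_sub_mem_box v
      refine Set.mem_add.2 ⟨v - z, ⟨hB.sub_mem hv hz, hbox⟩, -(w - z), ?_, by ring⟩
      rw [Set.mem_preimage, neg_neg]
      exact hB.sub_mem hw hz
    · intro hd
      obtain ⟨v, hv, w, hw, rfl⟩ := Set.mem_add.1 hd
      exact ⟨v, hv.1, -w, hw, by ring⟩
  · rintro _ z ⟨v, hv, w, hw, rfl⟩ hz
    exact ⟨v + z, hB.add_mem hv hz, w, hw, by ring⟩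
  · rintro p _ hp ⟨v, hv, w, hw, rfl⟩
    exact ⟨p * v, hB.mul_mem hp hv, p * w, hB.mul_mem hp hw, by ring⟩

theorem IsInvariant.difference_eq_univ (ht : t ≠ 0) (hB : IsInvariant t B) {x : Fin 3 → ℝ}
    (hx : x ∈ B) (hnt : ∀ N : ℕ, N ≠ 0 → (N : Fin 3 → ℝ) * x ∉ ringO) :
    {d | ∃ v ∈ B, ∃ w ∈ B, d = v - w} = Set.univ := by
  refine hB.difference.eq_univ_of_small ht fun δ hδ => ?_
  obtain ⟨m, hm, hP⟩ := (isUnitMod_expUnit 0).exists_pow ht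
  have hP0 : 1 < (expUnit 0 ^ m) 0 := one_lt_pow₀ (one_lt_expUnit_self 0) hm
  set P := expUnit 0 ^ m
  choose w hw hbox using fun n : ℕ => exists_sub_mem_box (P ^ n * x)
  obtain ⟨y, -, φ, hφ, hlim⟩ := isCompact_Icc.tendsto_subseq hbox
  obtain ⟨N, hN⟩ := (Metric.cauchySeq_iff'.1 hlim.cauchySeq) δ hδ
  have h1 := hN (N + 1) (Nat.le_succ N)
  have hne : φ N < φ (N + 1) := hφ (Nat.lt_succ_self N)
  refine ⟨_, ⟨_, hB.sub_mem (hB.mul_mem (hP.pow (φ (N + 1))) hx) (hw (φ (N + 1))), _,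
    hB.sub_mem (hB.mul_mem (hP.pow (φ N)) hx) (hw (φ N)), rfl⟩, ?_, fun i => ?_⟩
  · intro h0
    have hz : P ^ φ (N + 1) - P ^ φ N ∈ ringO :=
      ringO.sub_mem (hP.pow _).mem (hP.pow _).mem
    have hz0 : P ^ φ (N + 1) - P ^ φ N ≠ 0 := by
      intro h
      have := congrFun (sub_eq_zero.1 h) 0
      simp only [Pi.pow_apply] at this
      exact absurd this (pow_lt_pow_right₀ hP0 hne).ne'
    obtain ⟨z, hzO, M, hM, hMz⟩ := exists_mul_eq_intCast hz hz0
    refine hnt M hM ?_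
    rw [← hMz]
    have : (P ^ φ (N + 1) - P ^ φ N) * z * x = z * (w (φ (N + 1)) - w (φ N)) := by
      linear_combination z * h0
    rw [this]
    exact ringO.mul_mem hzO (ringO.sub_mem (hw _) (hw _))
  · have := (dist_pi_lt_iff hδ).1 h1 i
    rwa [Real.dist_eq] at this

theorem IsInvariant.exists_translates_subset (ht : t ≠ 0) (hB : IsInvariant 1 B)
    (hne : B.Nonempty) (hnt : ∀ x ∈ B, ∀ N : ℕ, N ≠ 0 → (N : Fin 3 → ℝ) * x ∉ ringO)
    {ι : Type*} (τ : ι → Fin 3 → ℝ) (hτ : ∀ k, (t : Fin 3 → ℝ) * τ k ∈ ringO) (F : Finset ι) :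
    ∃ C ⊆ B, IsInvariant t C ∧ C.Nonempty ∧ ∀ v ∈ C, ∀ k ∈ F, v + τ k ∈ B := by
  classical
  induction F using Finset.induction with
  | empty => exact ⟨B, subset_rfl, ⟨hB.closed, hB.add_mem, fun hp => hB.mul_mem hp.to_one⟩, hne,
      by simp⟩
  | insert k F _ ih =>
    obtain ⟨C, hCB, hC, ⟨x, hx⟩, hF⟩ := ih
    refine ⟨{v | v ∈ C ∧ v + τ k ∈ C}, fun v hv => hCB hv.1, ⟨?_, ?_, ?_⟩, ?_, ?_⟩
    · exact hC.closed.inter (hC.closed.preimage (continuous_id.add continuous_const))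
    · rintro v z ⟨hv, hvt⟩ hz
      exact ⟨hC.add_mem hv hz, by rw [add_right_comm]; exact hC.add_mem hvt hz⟩
    · rintro p v hp ⟨hv, hvt⟩
      refine ⟨hC.mul_mem hp hv, ?_⟩
      obtain ⟨w, hw, hpw⟩ := hp.cong
      have : p * v + τ k = p * (v + τ k) - w * (t * τ k) := by
        linear_combination -τ k * hpw
      rw [this]
      exact hC.sub_mem (hC.mul_mem hp hvt) (ringO.mul_mem hw (hτ k))
    · have := hC.difference_eq_univ ht hx (hnt x (hCB hx))
      obtain ⟨v, hv, w, hw, h⟩ : τ k ∈ {d | ∃ v ∈ C, ∃ w ∈ C, d = v - w} :=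
        this ▸ Set.mem_univ _
      exact ⟨w, hw, by rw [h]; simpa using hv⟩
    · intro v hv l hl
      rcases Finset.mem_insert.1 hl with rfl | hl
      · exact hCB hv.2
      · exact hF v hv.1 l hl

theorem IsInvariant.exists_torsion (hB : IsInvariant 1 B) (hne : B.Nonempty) :
    ∃ x ∈ B, ∃ N : ℕ, N ≠ 0 ∧ (N : Fin 3 → ℝ) * x ∈ ringO := by
  by_contra! hnt
  have huniv : B = Set.univ := by
    refine Set.eq_univ_of_forall fun r => IsClosed.mem_of_forall_near hB.closed fun δ hδ => ?_
    obtain ⟨t, htδ⟩ := exists_nat_gt (4 / δ)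
    have ht0 : (0 : ℝ) < t := (div_pos (by norm_num) hδ).trans htδ
    have ht : t ≠ 0 := by rintro rfl; simp at ht0
    have : NeZero t := ⟨ht⟩
    let τ : (Fin 3 → Fin t) → Fin 3 → ℝ := fun k i =>
      ((k 0 : ℕ) + (k 1 : ℕ) * roots i + (k 2 : ℕ) * roots i ^ 2) / t
    have hτ : ∀ k, (t : Fin 3 → ℝ) * τ k ∈ ringO := fun k =>
      ⟨fun i => (k i : ℕ), fun i => by simp [τ]; field_simp⟩
    obtain ⟨C, -, -, ⟨v, hv⟩, hF⟩ := hB.exists_translates_subset ht hne hnt τ hτ Finset.univ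
    obtain ⟨w, ⟨n, hn⟩, hwr⟩ := exists_mem_ringO_near ((t : Fin 3 → ℝ) * (r - v))
    have ht' : (0 : ℤ) < t := by exact_mod_cast Nat.pos_of_ne_zero ht
    let k : Fin 3 → Fin t := fun i =>
      ⟨(n i % t).toNat, by have := Int.emod_lt_of_pos (n i) ht'
                           have := Int.emod_nonneg (n i) ht'.ne'; omega⟩
    have hk : ∀ i, ((k i : ℕ) : ℝ) = n i - t * ((n i / t : ℤ) : ℝ) := by
      intro i
      have h1 : ((k i : ℕ) : ℤ) = n i - t * (n i / t) := by
        have := Int.emod_nonneg (n i) ht'.ne'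
        have h2 := Int.emod_add_mul_ediv (n i) t
        simp only [k]
        rw [Int.toNat_of_nonneg this]; linarith
      exact_mod_cast h1
    refine ⟨_, hB.add_mem (hF v hv k (Finset.mem_univ _))
      (w := fun i => (n 0 / t : ℤ) + (n 1 / t : ℤ) * roots i + (n 2 / t : ℤ) * roots i ^ 2)
      ⟨fun i => n i / t, fun i => rfl⟩, fun i => ?_⟩
    have he : (v + τ k + fun i => (n 0 / t : ℤ) + (n 1 / t : ℤ) * roots i
        + (n 2 / t : ℤ) * roots i ^ 2 : Fin 3 → ℝ) i = v i + w i / t := by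
      simp only [Pi.add_apply, τ, hk, hn]
      field_simp
      ring
    have hi := hwr i
    simp only [Pi.mul_apply, Pi.natCast_apply, Pi.sub_apply] at hi
    rw [he, show r i - (v i + w i / t) = (t * (r i - v i) - w i) / t by field_simp; ring, abs_div,
      abs_of_pos ht0, div_lt_iff₀ ht0]
    rw [div_lt_iff₀ hδ] at htδ
    linarith
  exact hnt 0 (huniv ▸ Set.mem_univ _) 1 one_ne_zero (by simp)

/-- The accumulation points of an invariant set form an invariant set. -/
theorem IsInvariant.accumulation (hB : IsInvariant t B) :
    IsInvariant t {x | ∀ δ > 0, ∃ v ∈ B, v ≠ x ∧ dist v x < δ} := by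
  refine ⟨?_, ?_, ?_⟩
  · refine isClosed_of_closure_subset fun x hx δ hδ => ?_
    obtain ⟨y, hy, hxy⟩ := Metric.mem_closure_iff.1 hx (δ / 2) (by positivity)
    by_cases hne : x = y
    · subst hne; exact hy δ hδ
    · obtain ⟨v, hv, -, hvy⟩ := hy (min (δ / 2) (dist x y))
        (lt_min (by positivity) (dist_pos.2 hne))
      refine ⟨v, hv, ?_, ?_⟩
      · rintro rfl
        exact absurd hvy (not_lt.2 (min_le_right _ _))
      · have h1 := dist_triangle v y x
        have h2 := hvy.trans_le (min_le_left _ _)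
        rw [dist_comm] at hxy
        linarith
  · intro x w hx hw δ hδ
    obtain ⟨v, hv, hne, hd⟩ := hx δ hδ
    exact ⟨v + w, hB.add_mem hv hw, by simpa using hne, by simpa using hd⟩
  · intro p x hp hx δ hδ
    have hc : Continuous fun v : Fin 3 → ℝ => p * v := continuous_const.mul continuous_id
    obtain ⟨δ', hδ', h⟩ := Metric.continuous_iff.1 hc x δ hδ
    obtain ⟨v, hv, hne, hd⟩ := hx δ' hδ'
    refine ⟨p * v, hB.mul_mem hp hv, fun heq => hne ?_, h v hd⟩
    ext i
    exact mul_left_cancel₀ (hp.pos i).ne' (congrFun heq i)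

theorem IsInvariant.separated (hB : IsInvariant 1 B) (hne : B ≠ Set.univ) :
    ∃ κ > 0, ∀ v ∈ B, ∀ w ∈ B, dist v w < κ → v = w := by
  have hD : ¬ {x | ∀ δ > 0, ∃ v ∈ B, v ≠ x ∧ dist v x < δ}.Nonempty := by
    intro hDne
    obtain ⟨τ, hτ, t, ht, htτ⟩ := hB.accumulation.exists_torsion hDne
    apply hne
    have hE : IsInvariant t {v | v + τ ∈ B} := by
      refine ⟨hB.closed.preimage (continuous_id.add continuous_const), fun {v w} hv hw => ?_,
        fun {p v} hp hv => ?_⟩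
      · change v + w + τ ∈ B
        rw [add_right_comm]; exact hB.add_mem hv hw
      · obtain ⟨w, hw, hpw⟩ := hp.cong
        have : p * v + τ = p * (v + τ) - w * (t * τ) := by
          linear_combination -τ * hpw
        change p * v + τ ∈ B
        rw [this]
        exact hB.sub_mem (hB.mul_mem hp.to_one hv) (ringO.mul_mem hw htτ)
    have huniv := hE.eq_univ_of_small ht fun δ hδ => by
      obtain ⟨v, hv, hvτ, hd⟩ := hτ δ hδ
      refine ⟨v - τ, by change v - τ + τ ∈ B; simpa using hv, sub_ne_zero.2 hvτ, fun i => ?_⟩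
      simpa [Real.dist_eq] using (dist_pi_lt_iff hδ).1 hd i
    refine Set.eq_univ_of_forall fun r => ?_
    have : r - τ ∈ {v | v + τ ∈ B} := huniv ▸ Set.mem_univ _
    simpa using this
  by_contra! hcon
  choose v hv w hw hd hvw using fun n : ℕ => hcon (1 / ((n : ℝ) + 1)) (by positivity)
  choose z hz hbox using fun n => exists_sub_mem_box (v n)
  obtain ⟨x, -, φ, hφ, hlim⟩ := isCompact_Icc.tendsto_subseq hbox
  refine hD ⟨x, fun δ hδ => ?_⟩
  obtain ⟨N, hN⟩ := Metric.tendsto_atTop.1 hlim (δ / 2) (by positivity)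
  obtain ⟨M, hM⟩ := exists_nat_one_div_lt (show 0 < δ / 2 by positivity)
  set n := φ (max N M)
  have h1 : dist (v n - z n) x < δ / 2 := hN (max N M) (le_max_left _ _)
  have h2 : dist (w n - z n) (v n - z n) < δ / 2 := by
    rw [dist_sub_right, dist_comm]
    refine (hd n).trans (lt_of_le_of_lt ?_ hM)
    have : (M : ℝ) ≤ n := by exact_mod_cast (le_max_right N M).trans (hφ.id_le _)
    gcongr
  by_cases heq : v n - z n = x
  · refine ⟨w n - z n, hB.sub_mem (hw n) (hz n), ?_, ?_⟩
    · rw [← heq]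
      simpa using (hvw n).symm
    · rw [heq] at h2; linarith
  · exact ⟨v n - z n, hB.sub_mem (hv n) (hz n), heq, by linarith⟩

end CubicField

namespace CubicField

/-- The product of the sheared coordinates of `v`. -/
def shearProd (s s' : ℝ) (v : Fin 3 → ℝ) : ℝ := (v 0 + s * v 2) * (v 1 + s' * v 2) * v 2

/-- Grid points all of whose translates with positive first sheared coordinate have
sheared product of absolute value at least `ε`. -/
def bad (ε s s' : ℝ) : Set (Fin 3 → ℝ) :=
  {v | ∀ w ∈ ringO, 0 < (v + w) 0 + s * (v + w) 2 → ε ≤ |shearProd s s' (v + w)|}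

variable {ε s s' : ℝ}

theorem isClosed_bad_total (ε : ℝ) :
    IsClosed {q : ℝ × ℝ × (Fin 3 → ℝ) | q.2.2 ∈ bad ε q.1 q.2.1} := by
  have h : {q : ℝ × ℝ × (Fin 3 → ℝ) | q.2.2 ∈ bad ε q.1 q.2.1} = ⋂ w ∈ ringO,
      {q : ℝ × ℝ × (Fin 3 → ℝ) | 0 < (q.2.2 + w) 0 + q.1 * (q.2.2 + w) 2 ∧
        |shearProd q.1 q.2.1 (q.2.2 + w)| < ε}ᶜ := by
    ext q
    simp only [Set.mem_iInter]
    refine forall_congr' fun w => forall_congr' fun hw => ?_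
    change _ ↔ ¬ (_ ∧ _)
    rw [not_and, not_lt]
  rw [h]
  refine isClosed_biInter fun w hw => IsOpen.isClosed_compl ?_
  refine IsOpen.and (isOpen_lt continuous_const ?_) (isOpen_lt ?_ continuous_const)
  · simp only [Pi.add_apply]; fun_prop
  · simp only [shearProd, Pi.add_apply]; fun_prop

theorem isClosed_bad (ε s s' : ℝ) : IsClosed (bad ε s s') :=
  (isClosed_bad_total ε).preimage
    (continuous_const.prodMk (continuous_const.prodMk continuous_id) :
      Continuous fun v : Fin 3 → ℝ => (s, s', v))

theorem isClosed_bad_params (ε : ℝ) (v : Fin 3 → ℝ) :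
    IsClosed {q : ℝ × ℝ | v ∈ bad ε q.1 q.2} :=
  (isClosed_bad_total ε).preimage
    (continuous_fst.prodMk (continuous_snd.prodMk continuous_const) :
      Continuous fun q : ℝ × ℝ => (q.1, q.2, v))

theorem bad_add_mem {v w : Fin 3 → ℝ} (hv : v ∈ bad ε s s') (hw : w ∈ ringO) :
    v + w ∈ bad ε s s' := fun z hz => by
  rw [add_assoc]; exact hv (w + z) (ringO.add_mem hw hz)

theorem bad_sub_mem {v w : Fin 3 → ℝ} (hv : v ∈ bad ε s s') (hw : w ∈ ringO) :
    v - w ∈ bad ε s s' := by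
  rw [sub_eq_add_neg]; exact bad_add_mem hv (ringO.neg_mem hw)

theorem bad_mul_mem {p v : Fin 3 → ℝ} (hp : IsUnitMod 1 p) (hv : v ∈ bad ε s s') :
    p * v ∈ bad ε (s * (p 0 / p 2)) (s' * (p 1 / p 2)) := by
  intro w hw hpos
  have hu := hv (p⁻¹ * w) (ringO.mul_mem hp.inv_mem hw)
  have h0 := hp.pos 0
  have h1 := hp.pos 1
  have h2 := hp.pos 2
  have he : p * v + w = p * (v + p⁻¹ * w) := by linear_combination (-w) * hp.mul_inv
  rw [he] at hpos ⊢
  generalize v + p⁻¹ * w = u at *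
  have e0 : (p * u) 0 + s * (p 0 / p 2) * (p * u) 2 = p 0 * (u 0 + s * u 2) := by
    simp only [Pi.mul_apply]; field_simp
  have e1 : shearProd (s * (p 0 / p 2)) (s' * (p 1 / p 2)) (p * u) = shearProd s s' u := by
    have : shearProd (s * (p 0 / p 2)) (s' * (p 1 / p 2)) (p * u)
        = (p 0 * p 1 * p 2) * shearProd s s' u := by
      simp only [shearProd, Pi.mul_apply]; field_simp
    rw [this, hp.prod_eq, one_mul]
  rw [e0] at hpos
  rw [e1]
  exact hu (pos_of_mul_pos_right hpos h0.le)

theorem isInvariant_bad_zero (ε : ℝ) : IsInvariant 1 (bad ε 0 0) :=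
  ⟨isClosed_bad ε 0 0, bad_add_mem, fun hp hv => by simpa using bad_mul_mem hp hv⟩

theorem bad_zero_ne_univ (hε : 0 < ε) : bad ε 0 0 ≠ Set.univ := by
  intro h
  have hv : (![ε / 2, 1, 1] : Fin 3 → ℝ) ∈ bad ε 0 0 := h ▸ Set.mem_univ _
  have := hv 0 ringO.zero_mem (by simpa using hε)
  simp only [shearProd, add_zero, Matrix.cons_val, mul_one] at this
  rw [abs_of_pos (by positivity)] at this
  linarith

theorem bad_near_bad_zero (ε : ℝ) {κ : ℝ} (hκ : 0 < κ) :
    ∃ σ > 0, ∀ s s' : ℝ, |s| < σ → |s'| < σ → ∀ v ∈ bad ε s s', ∃ b ∈ bad ε 0 0, dist v b < κ := by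
  by_contra! hcon
  choose s s' hs hs' v hv hb using fun n : ℕ => hcon (1 / ((n : ℝ) + 1)) (by positivity)
  choose z hz hbox using fun n => exists_sub_mem_box (v n)
  obtain ⟨x, -, φ, hφ, hlim⟩ := isCompact_Icc.tendsto_subseq hbox
  have hz0 : Tendsto (fun n : ℕ => 1 / ((n : ℝ) + 1)) atTop (nhds 0) :=
    tendsto_one_div_add_atTop_nhds_zero_nat
  have hs0 : Tendsto s atTop (nhds 0) := squeeze_zero_norm (fun n => (hs n).le) hz0
  have hs0' : Tendsto s' atTop (nhds 0) := squeeze_zero_norm (fun n => (hs' n).le) hz0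
  have hlim3 : Tendsto (fun n => (s (φ n), s' (φ n), v (φ n) - z (φ n))) atTop
      (nhds (0, 0, x)) :=
    (hs0.comp hφ.tendsto_atTop).prodMk_nhds ((hs0'.comp hφ.tendsto_atTop).prodMk_nhds hlim)
  have hx : x ∈ bad ε 0 0 := (isClosed_bad_total ε).mem_of_tendsto hlim3
    (Eventually.of_forall fun n => bad_sub_mem (hv (φ n)) (hz (φ n)))
  obtain ⟨N, hN⟩ := Metric.tendsto_atTop.1 hlim κ hκ
  have h1 : dist (v (φ N) - z (φ N)) x < κ := hN N le_rfl
  have h2 := hb (φ N) (x + z (φ N)) (bad_add_mem hx (hz _))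
  rw [dist_eq_norm] at h1 h2
  rw [show v (φ N) - (x + z (φ N)) = v (φ N) - z (φ N) - x by ring] at h2
  linarith

theorem isUnitMod_roots_sq : IsUnitMod 1 (roots ^ 2) := by
  have hinv : ∀ i, roots i * (roots i ^ 2 + roots i - 2) = 1 := fun i => by
    linear_combination roots_cubic i
  have h : (roots ^ 2)⁻¹ = (roots ^ 2 + roots - 2) ^ 2 := by
    ext i
    simp only [Pi.inv_apply, Pi.pow_apply, Pi.sub_apply, Pi.add_apply, Pi.ofNat_apply]
    rw [inv_eq_iff_eq_inv, ← inv_pow, ← eq_inv_of_mul_eq_one_left (hinv i)]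
  refine IsUnitMod.of_mem (fun i => ?_) ?_ (pow_mem roots_mem 2) ?_
  · have : roots i ≠ 0 := left_ne_zero_of_mul_eq_one (hinv i)
    simp only [Pi.pow_apply]; positivity
  · simp only [Pi.pow_apply]
    rw [← mul_pow, ← mul_pow, roots_esymm_three, one_pow]
  · rw [h]
    exact pow_mem (ringO.sub_mem (ringO.add_mem (pow_mem roots_mem 2) roots_mem)
      (by exact_mod_cast natCast_mem ringO 2)) 2

theorem exists_expanding_unit (l : Fin 3) :
    ∃ u, IsUnitMod 1 u ∧ 1 < u l ∧ u 0 ≤ u 2 ∧ u 1 ≤ u 2 := by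
  have h0 := roots_zero_mem
  have h1 := roots_one_mem
  have h2 := roots_two_mem
  norm_num at h0 h1 h2
  have e21 : (1 : Fin 3) - 2 = 2 := rfl
  have e20 : (0 : Fin 3) - 2 = 1 := rfl
  fin_cases l
  · refine ⟨_, isUnitMod_roots_sq, ?_, ?_, ?_⟩ <;> simp only [Pi.pow_apply, Fin.zero_eta] <;>
      nlinarith
  · refine ⟨_, isUnitMod_expUnit_zero.inv.mul (isUnitMod_expUnit 2), ?_, ?_, ?_⟩
    · simp only [Fin.mk_one, Pi.mul_apply, Pi.inv_apply, expUnit, sub_zero, e21]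
      rw [inv_mul_eq_div, one_lt_div (by nlinarith)]
      nlinarith
    · have p0 : 0 < (1 + roots 0) ^ 2 := by nlinarith
      have p2 : 0 < (1 + roots 2) ^ 2 := by nlinarith
      simp only [Pi.mul_apply, Pi.inv_apply, expUnit, sub_zero, e20, sub_self]
      rw [inv_mul_eq_div, inv_mul_eq_div, div_le_div_iff₀ p0 p2]
      have a : (1 + roots 1) ^ 2 ≤ 1 := by nlinarith
      have b : (1 + roots 2) ^ 2 ≤ 1 := by nlinarith
      have c : 1 ≤ (1 + roots 0) ^ 2 := by nlinarith
      nlinarith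
    · have p1 : 0 < (1 + roots 1) ^ 2 := by nlinarith
      have p2 : 0 < (1 + roots 2) ^ 2 := by nlinarith
      simp only [Pi.mul_apply, Pi.inv_apply, expUnit, sub_zero, e21, sub_self]
      rw [inv_mul_eq_div, inv_mul_eq_div, div_le_div_iff₀ p1 p2]
      have b : (1 + roots 2) ^ 2 ≤ 1 := by nlinarith
      have c : 5 ≤ (1 + roots 0) ^ 2 := by nlinarith
      have d : 1 / 4 ≤ (1 + roots 1) ^ 2 := by nlinarith
      calc _ ≤ (1 : ℝ) * 1 := by gcongr
        _ ≤ 5 * (1 / 4) := by norm_num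
        _ ≤ _ := by gcongr
  · have h := expUnit_lt_one (i := 2) (j := 0) (by decide)
    have h' := expUnit_lt_one (i := 2) (j := 1) (by decide)
    have := one_lt_expUnit_self 2
    exact ⟨_, isUnitMod_expUnit 2, this, by linarith, by linarith⟩

theorem dist_unit_pow_lt {κ₀ κ σ : ℝ}
    (hsep : ∀ v ∈ bad ε 0 0, ∀ w ∈ bad ε 0 0, dist v w < κ₀ → v = w)
    (hnear : ∀ s s' : ℝ, |s| < σ → |s'| < σ → ∀ v ∈ bad ε s s', ∃ b ∈ bad ε 0 0, dist v b < κ)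
    {u : Fin 3 → ℝ} (hu : IsUnitMod 1 u) (h0 : u 0 ≤ u 2) (h1 : u 1 ≤ u 2)
    (hκ : (u 2 + 1) * κ ≤ κ₀) (hκ0 : 0 < κ)
    (hs : |s| < σ) (hs' : |s'| < σ) {v b : Fin 3 → ℝ} (hv : v ∈ bad ε s s')
    (hb : b ∈ bad ε 0 0) (hvb : dist v b < κ) (m : ℕ) : dist (u ^ m * v) (u ^ m * b) < κ := by
  induction m with
  | zero => simpa using hvb
  | succ m ih =>
    have hp := hu.pow (m + 1)
    have hle : ∀ i, u i ≤ u 2 := fun i => by fin_cases i <;> simp [h0, h1]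
    have hratio : ∀ i (a : ℝ), |a| < σ → |a * ((u ^ (m + 1)) i / (u ^ (m + 1)) 2)| < σ := by
      intro i a ha
      have hq : (u ^ (m + 1)) i / (u ^ (m + 1)) 2 ≤ 1 := by
        rw [div_le_one (hp.pos 2)]
        exact pow_le_pow_left₀ (hu.pos i).le (hle i) _
      have hq0 : 0 ≤ (u ^ (m + 1)) i / (u ^ (m + 1)) 2 := (div_pos (hp.pos i) (hp.pos 2)).le
      rw [abs_mul, abs_of_nonneg hq0]
      exact (mul_le_of_le_one_right (abs_nonneg a) hq).trans_lt ha
    obtain ⟨b', hb', hd⟩ := hnear _ _ (hratio 0 s hs) (hratio 1 s' hs') _ (bad_mul_mem hp hv)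
    have hub : u ^ (m + 1) * b ∈ bad ε 0 0 := (isInvariant_bad_zero ε).mul_mem hp hb
    have hstep : dist (u ^ (m + 1) * v) (u ^ (m + 1) * b) < u 2 * κ := by
      rw [dist_pi_lt_iff (mul_pos (hu.pos 2) hκ0)]
      intro i
      have hi := (dist_pi_lt_iff hκ0).1 ih i
      rw [pow_succ', mul_assoc, mul_assoc, Pi.mul_apply, Pi.mul_apply u, Real.dist_eq, ← mul_sub,
        abs_mul, abs_of_pos (hu.pos i)]
      exact mul_lt_mul' (hle i) hi (abs_nonneg _) (hu.pos 2)
    have heq : b' = u ^ (m + 1) * b := by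
      refine hsep _ hb' _ hub ?_
      have := dist_triangle_left b' (u ^ (m + 1) * b) (u ^ (m + 1) * v)
      linarith
    rwa [heq] at hd

theorem bad_subset_bad_zero (hε : 0 < ε) (s s' : ℝ) : bad ε s s' ⊆ bad ε 0 0 := by
  intro v hv
  obtain ⟨κ₀, hκ₀, hsep⟩ := (isInvariant_bad_zero ε).separated (bad_zero_ne_univ hε)
  choose u hu hul hu0 hu1 using exists_expanding_unit
  have hM : ∀ l, 0 < u l 2 := fun l => (hu l).pos 2
  set M := ∑ l, u l 2 with hM_def
  have hM0 : 0 < M + 1 := by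
    have : 0 ≤ M := Finset.sum_nonneg fun l _ => (hM l).le
    linarith
  have hκ : 0 < κ₀ / (M + 1) := div_pos hκ₀ hM0
  obtain ⟨σ, hσ, hnear⟩ := bad_near_bad_zero ε hκ
  set S := |s| + |s'| + 1
  have hS : 0 < S := by positivity
  obtain ⟨n, hn0, hn⟩ := exists_expUnit_pow_lt 2 (div_pos hσ hS)
  have hp := (isUnitMod_expUnit 2).pow n
  have hp2 : 1 < (expUnit 2 ^ n) 2 := one_lt_pow₀ (one_lt_expUnit_self 2) hn0
  set p := expUnit 2 ^ n with hp_def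
  have hsmall : ∀ i ≠ 2, ∀ a, |a| ≤ S → |a * (p i / p 2)| < σ := by
    intro i hi a ha
    have h1 : p i < σ / S := hn i hi
    have h2 : p i / p 2 ≤ p i := div_le_self (hp.pos i).le hp2.le
    rw [abs_mul, abs_of_pos (div_pos (hp.pos i) (hp.pos 2))]
    have h3 : p i / p 2 < σ / S := h2.trans_lt h1
    have h4 : 0 ≤ p i / p 2 := (div_pos (hp.pos i) (hp.pos 2)).le
    calc |a| * (p i / p 2) ≤ S * (p i / p 2) := by gcongr
      _ < S * (σ / S) := by gcongr
      _ = σ := by field_simp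
  have hs1 := hsmall 0 (by decide) s (by simp only [S]; linarith [abs_nonneg s'])
  have hs1' := hsmall 1 (by decide) s' (by simp only [S]; linarith [abs_nonneg s])
  have hv' := bad_mul_mem hp hv
  obtain ⟨b, hb, hvb⟩ := hnear _ _ hs1 hs1' _ hv'
  have heq : p * v = b := by
    ext l
    by_contra hne
    have hpos : 0 < |(p * v) l - b l| := abs_pos.2 (sub_ne_zero.2 hne)
    obtain ⟨m, hm⟩ := pow_unbounded_of_one_lt (κ₀ / (M + 1) / |(p * v) l - b l|) (hul l)
    rw [div_lt_iff₀ hpos] at hm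
    have hle : (u l 2 + 1) * (κ₀ / (M + 1)) ≤ κ₀ := by
      have : u l 2 ≤ M := Finset.single_le_sum (fun k _ => (hM k).le) (Finset.mem_univ l)
      calc (u l 2 + 1) * (κ₀ / (M + 1)) ≤ (M + 1) * (κ₀ / (M + 1)) := by gcongr
        _ = κ₀ := by field_simp
    have hd := dist_unit_pow_lt hsep hnear (hu l) (hu0 l) (hu1 l) hle hκ hs1 hs1' hv' hb hvb m
    have hl := (dist_pi_lt_iff hκ).1 hd l
    rw [Pi.mul_apply, Pi.mul_apply (u l ^ m) b, Real.dist_eq, ← mul_sub, abs_mul, Pi.pow_apply,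
      abs_of_pos (pow_pos ((hu l).pos l) m)] at hl
    linarith
  have hv0 : v = p⁻¹ * b := by
    rw [← heq]; linear_combination (-v) * hp.mul_inv
  rw [hv0]
  exact (isInvariant_bad_zero ε).mul_mem hp.inv hb

end CubicField

namespace CubicField

variable {ε : ℝ}

theorem exists_finite_representatives (hε : 0 < ε) :
    ∃ F : Set (Fin 3 → ℝ), F.Finite ∧ ∀ v ∈ bad ε 0 0, ∃ w ∈ ringO, v - w ∈ F := by
  obtain ⟨κ, hκ, hsep⟩ := (isInvariant_bad_zero ε).separated (bad_zero_ne_univ hε)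
  refine ⟨bad ε 0 0 ∩ Set.Icc (fun _ => -4) (fun _ => 4), ?_, fun v hv => ?_⟩
  · by_contra hinf
    have hinf : Set.Infinite _ := hinf
    obtain ⟨x, -, φ, hφ, hlim⟩ := isCompact_Icc.tendsto_subseq
      fun n : ℕ => (hinf.natEmbedding _ n).2.2
    obtain ⟨N, hN⟩ := Metric.cauchySeq_iff'.1 hlim.cauchySeq κ hκ
    have h := hsep _ (hinf.natEmbedding _ _).2.1 _ (hinf.natEmbedding _ _).2.1
      (hN (N + 1) (Nat.le_succ N))
    have h' := hφ.injective ((hinf.natEmbedding _).injective (Subtype.ext h))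
    omega
  · obtain ⟨w, hw, hbox⟩ := exists_sub_mem_box v
    exact ⟨w, hw, bad_sub_mem hv hw, hbox⟩

theorem exists_mem_ringO_direction (b : Fin 3 → ℝ) (s s' : ℝ) {δ : ℝ} (hδ : 0 < δ) :
    ∃ w ∈ ringO, 0 < (b + w) 2 ∧ |(b + w) 0 + s * (b + w) 2| < δ * (b + w) 2 ∧
      |(b + w) 1 + s' * (b + w) 2| < δ * (b + w) 2 := by
  set S := |s| + |s'| + 1
  set Y := 5 + 4 * S / δ
  obtain ⟨w, hw, h⟩ := exists_mem_ringO_near (![-s * Y, -s' * Y, Y] - b)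
  have h0 := h 0
  have h1 := h 1
  have h2 := h 2
  simp only [Pi.sub_apply, Matrix.cons_val] at h0 h1 h2
  have hS : 4 * S / δ * δ = 4 * S := by field_simp
  have hSδ : 0 < 4 * S / δ := by positivity
  have hb2 : 1 + 4 * S / δ ≤ (b + w) 2 := by
    rw [Pi.add_apply]
    have := (abs_le.1 h2).2
    simp only [Y] at this
    linarith
  have hpos : 0 < (b + w) 2 := by linarith
  have hδb : 4 * S < δ * (b + w) 2 := by nlinarith
  have key : ∀ (a : ℝ) (i : Fin 3), |-a * Y - b i - w i| ≤ 4 → |a| + 1 ≤ S →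
      |(b + w) i + a * (b + w) 2| < δ * (b + w) 2 := by
    intro a i ha haS
    have e : (b + w) i + a * (b + w) 2 = -(-a * Y - b i - w i) - a * (Y - b 2 - w 2) := by
      simp only [Pi.add_apply]; ring
    rw [e]
    have h3 := abs_sub (-(-a * Y - b i - w i)) (a * (Y - b 2 - w 2))
    rw [abs_neg, abs_mul] at h3
    have h4 : |a| * |Y - b 2 - w 2| ≤ |a| * 4 := by gcongr
    linarith
  exact ⟨w, hw, hpos, key s 0 h0 (by simp only [S]; linarith [abs_nonneg s']),
    key s' 1 h1 (by simp only [S]; linarith [abs_nonneg s])⟩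

theorem exists_not_mem_bad (hε : 0 < ε) (b : Fin 3 → ℝ) (s s' : ℝ) {δ : ℝ} (hδ : 0 < δ) :
    ∃ r : ℝ, |r - s| < δ ∧ b ∉ bad ε r s' := by
  obtain ⟨w, hw, hpos, h0, -⟩ := exists_mem_ringO_direction b s s' (half_pos hδ)
  set v := b + w
  have hlim : Tendsto (fun h : ℝ => |h * v 2 * (v 1 + s' * v 2) * v 2|)
      (nhdsWithin 0 (Set.Ioi 0)) (nhds 0) := by
    have : Continuous fun h : ℝ => |h * v 2 * (v 1 + s' * v 2) * v 2| := by fun_prop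
    have := (this.tendsto 0).mono_left (nhdsWithin_le_nhds (s := Set.Ioi 0))
    simpa using this
  obtain ⟨h, hh, hhε⟩ := (Filter.Eventually.and (Ioo_mem_nhdsGT (half_pos hδ))
    (hlim.eventually_lt_const hε)).exists
  have e : v 0 + (-v 0 / v 2 + h) * v 2 = h * v 2 := by field_simp; ring
  refine ⟨-v 0 / v 2 + h, ?_, fun hb => ?_⟩
  · have h1 : |-v 0 / v 2 - s| < δ / 2 := by
      rw [show -v 0 / v 2 - s = -(v 0 + s * v 2) / v 2 by field_simp; ring, abs_div, abs_neg,
        abs_of_pos hpos, div_lt_iff₀ hpos]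
      exact h0
    rw [show -v 0 / v 2 + h - s = (-v 0 / v 2 - s) + h by ring]
    have := abs_add_le (-v 0 / v 2 - s) h
    rw [abs_of_pos hh.1] at this
    have := hh.2
    linarith
  · have := hb w hw (by change 0 < v 0 + _ * v 2; rw [e]; exact mul_pos hh.1 hpos)
    change ε ≤ |(v 0 + _ * v 2) * _ * _| at this
    rw [e] at this
    linarith

theorem exists_ball_forall_not_mem_bad (hε : 0 < ε) (F : Finset (Fin 3 → ℝ)) :
    ∃ q : ℝ × ℝ, ∃ δ > 0, ∀ q' ∈ Metric.ball q δ, ∀ b ∈ F, b ∉ bad ε q'.1 q'.2 := by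
  classical
  induction F using Finset.induction with
  | empty => exact ⟨0, 1, one_pos, by simp⟩
  | insert b F _ ih =>
    obtain ⟨q, δ, hδ, hq⟩ := ih
    obtain ⟨r, hr, hb⟩ := exists_not_mem_bad hε b q.1 q.2 hδ
    have hopen : IsOpen ({q' : ℝ × ℝ | b ∈ bad ε q'.1 q'.2}ᶜ ∩ Metric.ball q δ) :=
      (isClosed_bad_params ε b).isOpen_compl.inter Metric.isOpen_ball
    have hmem : (r, q.2) ∈ {q' : ℝ × ℝ | b ∈ bad ε q'.1 q'.2}ᶜ ∩ Metric.ball q δ := by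
      refine ⟨hb, ?_⟩
      rw [Metric.mem_ball, Prod.dist_eq, dist_self]
      exact max_lt (by rwa [Real.dist_eq]) hδ
    obtain ⟨δ', hδ', hsub⟩ := Metric.isOpen_iff.1 hopen _ hmem
    refine ⟨(r, q.2), δ', hδ', fun q' hq' c hc => ?_⟩
    rcases Finset.mem_insert.1 hc with rfl | hc
    · exact (hsub hq').1
    · exact hq q' (hsub hq').2 c hc

theorem exists_ball_bad_eq_empty (hε : 0 < ε) :
    ∃ q : ℝ × ℝ, ∃ δ > 0, ∀ q' ∈ Metric.ball q δ, bad ε q'.1 q'.2 = ∅ := by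
  obtain ⟨F, hF, hrep⟩ := exists_finite_representatives hε
  obtain ⟨q, δ, hδ, hq⟩ := exists_ball_forall_not_mem_bad hε hF.toFinset
  refine ⟨q, δ, hδ, fun q' hq' => Set.eq_empty_of_forall_notMem fun v hv => ?_⟩
  obtain ⟨w, hw, hvF⟩ := hrep v (bad_subset_bad_zero hε _ _ hv)
  exact hq q' hq' _ (hF.mem_toFinset.2 hvF) (bad_sub_mem hv hw)

theorem exists_bezout_factor (a b : ℤ) :
    ∃ g m n x y : ℤ, a = g * m ∧ b = g * n ∧ m * x + n * y = 1 := by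
  obtain ⟨m, n, hm, hn, hu⟩ := extract_gcd a b
  obtain ⟨x, y, hxy⟩ := (gcd_isUnit_iff m n).1 hu
  exact ⟨_, m, n, x, y, hm, hn, by linarith⟩

/-- Shear parameters killing a primitive direction of the ring can be chosen in any ball. -/
theorem exists_primitive_direction (q : ℝ × ℝ) {δ : ℝ} (hδ : 0 < δ) :
    ∃ (n : Fin 3 → ℤ) (c d : ℤ) (w : Fin 3 → ℝ), c * n 2 - d * n 1 = 1 ∧
      (∀ i, w i = n 0 + n 1 * roots i + n 2 * roots i ^ 2) ∧ w 2 ≠ 0 ∧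
      (-w 0 / w 2, -w 1 / w 2) ∈ Metric.ball q δ := by
  obtain ⟨w, ⟨n, hn⟩, hpos, h0, h1⟩ := exists_mem_ringO_direction 0 q.1 q.2 hδ
  rw [zero_add] at hpos h0 h1
  obtain ⟨g, m₁, m₂, x, y, hg1, hg2, hxy⟩ := exists_bezout_factor (n 1) (n 2)
  set e : Fin 3 → ℝ := fun i => -y * roots i + x * roots i ^ 2
  have hev : ∀ (A B : ℝ), 0 < A → ∀ᶠ K : ℕ in atTop, 0 < K * A + B := by
    intro A B hA
    have : Tendsto (fun K : ℕ => (K : ℝ) * A + B) atTop atTop :=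
      tendsto_atTop_add_const_right _ _ (tendsto_natCast_atTop_atTop.atTop_mul_const hA)
    exact this.eventually_gt_atTop 0
  rw [abs_lt] at h0 h1
  obtain ⟨K, hK, ha, hb, hc, hd⟩ := ((hev (w 2) (e 2) hpos).and
    ((hev (δ * w 2 - (w 0 + q.1 * w 2)) (δ * e 2 - (e 0 + q.1 * e 2)) (by linarith)).and
    ((hev (δ * w 2 + (w 0 + q.1 * w 2)) (δ * e 2 + (e 0 + q.1 * e 2)) (by linarith)).and
    ((hev (δ * w 2 - (w 1 + q.2 * w 2)) (δ * e 2 - (e 1 + q.2 * e 2)) (by linarith)).and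
    (hev (δ * w 2 + (w 1 + q.2 * w 2)) (δ * e 2 + (e 1 + q.2 * e 2)) (by linarith)))))).exists
  have hdist : ∀ a b r : ℝ, 0 < b → 0 < δ * b - (a + r * b) → 0 < δ * b + (a + r * b) →
      dist (-a / b) r < δ := by
    intro a b r hb h h'
    rw [Real.dist_eq, show -a / b - r = -(a + r * b) / b by field_simp; ring, abs_div, abs_neg,
      abs_of_pos hb, div_lt_iff₀ hb, abs_lt]
    constructor <;> linarith
  refine ⟨![K * n 0, K * n 1 - y, K * n 2 + x], m₁, m₂, fun i => K * w i + e i, ?_, ?_, hK.ne', ?_⟩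
  · simp only [Matrix.cons_val, hg1, hg2]
    linear_combination hxy
  · intro i
    simp only [hn, e, Matrix.cons_val]
    push_cast
    ring
  · rw [Metric.mem_ball, Prod.dist_eq]
    exact max_lt (hdist _ _ _ hK (by linarith) (by linarith))
      (hdist _ _ _ hK (by linarith) (by linarith))

/-- The discriminant of the ring is at least one. -/
theorem one_le_abs_vandermonde :
    1 ≤ |(roots 1 - roots 0) * (roots 2 - roots 0) * (roots 2 - roots 1)| := by
  have h0 := roots_zero_mem
  have h1 := roots_one_mem
  have h2 := roots_two_mem
  norm_num at h0 h1 h2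
  rw [abs_mul, abs_mul, abs_of_neg (by linarith : roots 1 - roots 0 < 0),
    abs_of_neg (by linarith : roots 2 - roots 0 < 0),
    abs_of_neg (by linarith : roots 2 - roots 1 < 0)]
  calc (1 : ℝ) = 1 * 1 * 1 := by norm_num
    _ ≤ _ := by
      have : 0 ≤ -(roots 1 - roots 0) * -(roots 2 - roots 0) :=
        mul_nonneg (by linarith) (by linarith)
      gcongr <;> linarith

end CubicField

/-- A lattice shape all of whose translates contain a point of small product with positive
first linear form. -/
def IsGood (ε x k χ₀ χ₁ : ℝ) : Prop :=
  ∀ r₀ r₁ r₂ : ℝ, ∃ z₀ z₁ z₂ : ℤ, 0 < (r₀ + z₀) + x * (r₁ + z₁) ∧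
    |((r₀ + z₀) + x * (r₁ + z₁)) * ((r₁ + z₁) - k * ((r₀ + z₀) + x * (r₁ + z₁))) *
      (χ₀ * (r₀ + z₀) + χ₁ * (r₁ + z₁) + (r₂ + z₂))| < ε

namespace CubicField

variable {ε : ℝ}

theorem isGood_of_basis {s s' : ℝ} (hbad : bad ε s s' = ∅) {β w : Fin 3 → ℝ}
    (hspan : ∀ u ∈ ringO, ∃ z₀ z₁ z₂ : ℤ, ∀ i, u i = z₀ * β i + z₁ + z₂ * w i)
    (hw2 : w 2 ≠ 0) (hw0 : w 0 + s * w 2 = 0) (hw1 : w 1 + s' * w 2 = 0)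
    (hA : 0 < β 0 + s * β 2)
    (hdet : 1 ≤ |w 2 * ((β 0 + s * β 2) * (1 + s') - (1 + s) * (β 1 + s' * β 2))|) :
    ∃ x k χ₀ χ₁, IsGood ε x k χ₀ χ₁ := by
  set A := β 0 + s * β 2 with hA_def
  set G := β 1 + s' * β 2 with hG_def
  set Δ := A * (1 + s') - (1 + s) * G with hΔ_def
  have hΔ : Δ ≠ 0 := by
    intro h
    rw [h] at hdet
    norm_num at hdet
  refine ⟨(1 + s) / A, -(G * A) / Δ, β 2 / w 2, 1 / w 2, fun r₀ r₁ r₂ => ?_⟩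
  have hnot : (fun i => r₀ * β i + r₁ + r₂ * w i : Fin 3 → ℝ) ∉ bad ε s s' := by
    rw [hbad]; exact Set.notMem_empty _
  simp only [bad] at hnot
  obtain ⟨u, hu, hpos, hlt⟩ : ∃ u ∈ ringO,
      0 < ((fun i => r₀ * β i + r₁ + r₂ * w i) + u) 0
        + s * ((fun i => r₀ * β i + r₁ + r₂ * w i) + u) 2 ∧
      |shearProd s s' ((fun i => r₀ * β i + r₁ + r₂ * w i) + u)| < ε := by
    by_contra! h
    exact hnot h
  obtain ⟨z₀, z₁, z₂, hz⟩ := hspan u hu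
  refine ⟨z₀, z₁, z₂, ?_⟩
  simp only [shearProd, Pi.add_apply, hz] at hpos hlt
  generalize hy0 : r₀ + (z₀ : ℝ) = y₀
  generalize hy1 : r₁ + (z₁ : ℝ) = y₁
  generalize hy2 : r₂ + (z₂ : ℝ) = y₂
  have e0 : r₀ * β 0 + r₁ + r₂ * w 0 + (z₀ * β 0 + z₁ + z₂ * w 0)
      + s * (r₀ * β 2 + r₁ + r₂ * w 2 + (z₀ * β 2 + z₁ + z₂ * w 2))
      = A * (y₀ + (1 + s) / A * y₁) := by
    rw [← hy0, ← hy1]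
    field_simp
    rw [hA_def]
    linear_combination (r₂ + z₂) * hw0
  have e1 : r₀ * β 1 + r₁ + r₂ * w 1 + (z₀ * β 1 + z₁ + z₂ * w 1)
      + s' * (r₀ * β 2 + r₁ + r₂ * w 2 + (z₀ * β 2 + z₁ + z₂ * w 2))
      = Δ / A * (y₁ - -(G * A) / Δ * (y₀ + (1 + s) / A * y₁)) := by
    have : r₀ * β 1 + r₁ + r₂ * w 1 + (z₀ * β 1 + z₁ + z₂ * w 1)
      + s' * (r₀ * β 2 + r₁ + r₂ * w 2 + (z₀ * β 2 + z₁ + z₂ * w 2)) = G * y₀ + (1 + s') * y₁ := by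
      rw [← hy0, ← hy1, hG_def]
      linear_combination (r₂ + z₂) * hw1
    rw [this]
    field_simp
    rw [hΔ_def]
    ring
  have e2 : r₀ * β 2 + r₁ + r₂ * w 2 + (z₀ * β 2 + z₁ + z₂ * w 2)
      = w 2 * (β 2 / w 2 * y₀ + 1 / w 2 * y₁ + y₂) := by
    rw [← hy0, ← hy1, ← hy2]
    field_simp
    ring
  rw [e0] at hpos hlt
  rw [e1, e2] at hlt
  refine ⟨pos_of_mul_pos_right hpos hA.le, ?_⟩
  generalize y₀ + (1 + s) / A * y₁ = W₀ at *
  generalize y₁ - -(G * A) / Δ * W₀ = W₁ at *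
  generalize β 2 / w 2 * y₀ + 1 / w 2 * y₁ + y₂ = W₂ at *
  have : A * W₀ * (Δ / A * W₁) * (w 2 * W₂) = (w 2 * Δ) * (W₀ * W₁ * W₂) := by field_simp
  rw [this, abs_mul] at hlt
  exact (le_mul_of_one_le_left (abs_nonneg _) hdet).trans_lt hlt

theorem exists_isGood (hε : 0 < ε) : ∃ x k χ₀ χ₁, IsGood ε x k χ₀ χ₁ := by
  obtain ⟨q, δ, hδ, hq⟩ := exists_ball_bad_eq_empty hε
  obtain ⟨n, c, d, w, hcd, hw, hw2, hball⟩ := exists_primitive_direction q hδ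
  have hbad := hq _ hball
  set s := -w 0 / w 2 with hs_def
  set s' := -w 1 / w 2 with hs'_def
  have hw0 : w 0 + s * w 2 = 0 := by rw [hs_def]; field_simp; ring
  have hw1 : w 1 + s' * w 2 = 0 := by rw [hs'_def]; field_simp; ring
  have hcdR : (c * n 2 - d * n 1 : ℝ) = 1 := by exact_mod_cast hcd
  have hmain : ∀ σ a : ℤ, σ * σ = 1 →
      0 < (σ * (a + c * roots 0 + d * roots 0 ^ 2) : ℝ)
        + s * (σ * (a + c * roots 2 + d * roots 2 ^ 2)) →
      ∃ x k χ₀ χ₁, IsGood ε x k χ₀ χ₁ := by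
    intro σ a hσ hA
    have hσR : (σ * σ : ℝ) = 1 := by exact_mod_cast hσ
    refine isGood_of_basis hbad (β := fun i => σ * (a + c * roots i + d * roots i ^ 2)) (w := w)
      ?_ hw2 hw0 hw1 hA ?_
    · rintro u ⟨m, hm⟩
      refine ⟨σ * (m 1 * n 2 - m 2 * n 1),
        m 0 - a * (m 1 * n 2 - m 2 * n 1) - (c * m 2 - d * m 1) * n 0,
        c * m 2 - d * m 1, fun i => ?_⟩
      rw [hm, hw]
      push_cast
      linear_combination (-(m 1 * roots i + m 2 * roots i ^ 2)) * hcdR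
        - (m 1 * n 2 - m 2 * n 1) * (a + c * roots i + d * roots i ^ 2) * hσR
    · have hσ1 : |(σ : ℝ)| = 1 := by
        rw [← sq_eq_sq₀ (abs_nonneg _) zero_le_one, sq_abs]; linarith
      set b : Fin 3 → ℝ := fun i => a + c * roots i + d * roots i ^ 2 with hb
      have hdet : w 2 * ((σ * b 0 + s * (σ * b 2)) * (1 + s')
          - (1 + s) * (σ * b 1 + s' * (σ * b 2)))
          = -σ * ((roots 1 - roots 0) * (roots 2 - roots 0) * (roots 2 - roots 1)) := by
        have h1 : w 2 * ((σ * b 0 + s * (σ * b 2)) * (1 + s')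
          - (1 + s) * (σ * b 1 + s' * (σ * b 2))) =
          σ * ((b 0 - b 1) * w 2 + (s * w 2) * (b 2 - b 1) + (s' * w 2) * (b 0 - b 2)) := by ring
        rw [h1, eq_neg_of_add_eq_zero_right hw0, eq_neg_of_add_eq_zero_right hw1, hw, hw, hw]
        simp only [hb]
        linear_combination (-σ * ((roots 1 - roots 0) * (roots 2 - roots 0)
          * (roots 2 - roots 1))) * hcdR
      rw [hdet, abs_mul, abs_neg, hσ1, one_mul]
      exact one_le_abs_vandermonde
  have hcases : ∀ a : ℤ, ((a + c * roots 0 + d * roots 0 ^ 2 : ℝ)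
      + s * (a + c * roots 2 + d * roots 2 ^ 2)) ≠ 0 → ∃ x k χ₀ χ₁, IsGood ε x k χ₀ χ₁ := by
    intro a ha
    rcases lt_or_gt_of_ne ha with h | h
    · exact hmain (-1) a (by norm_num) (by push_cast; linarith)
    · exact hmain 1 a (by norm_num) (by push_cast; linarith)
  by_cases h0 : ((0 : ℤ) + c * roots 0 + d * roots 0 ^ 2 : ℝ)
      + s * ((0 : ℤ) + c * roots 2 + d * roots 2 ^ 2) = 0
  · by_cases h1 : ((1 : ℤ) + c * roots 0 + d * roots 0 ^ 2 : ℝ)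
      + s * ((1 : ℤ) + c * roots 2 + d * roots 2 ^ 2) = 0
    · exfalso
      push_cast at h0 h1
      have hs1 : 1 + s = 0 := by linarith
      have hs : s = -1 := by linarith
      rw [hs, hw, hw] at hw0
      rw [hs] at h0
      have hv := one_le_abs_vandermonde
      have hne : roots 0 - roots 2 ≠ 0 := by
        intro h
        have : roots 2 - roots 0 = 0 := by linarith
        rw [this] at hv
        norm_num at hv
      have hc : c + d * (roots 0 + roots 2) = 0 := by
        refine (mul_eq_zero.1 ?_).resolve_right hne
        linear_combination h0
      have hn : n 1 + n 2 * (roots 0 + roots 2) = 0 := by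
        refine (mul_eq_zero.1 ?_).resolve_right hne
        linear_combination hw0
      have : (c * n 2 - d * n 1 : ℝ) = 0 := by
        linear_combination (n 2 : ℝ) * hc - d * hn
      linarith
    · exact hcases 1 h1
  · exact hcases 0 h0

end CubicField

theorem IsGood.eventually {ε x k χ₀ χ₁ : ℝ} (h : IsGood ε x k χ₀ χ₁) :
    ∃ ρ > 0, ∃ κ > 0, ∀ x' k' χ₀' χ₁' : ℝ, |x' - x| < ρ → |k' - k| < ρ → |χ₀' - χ₀| < ρ →
      |χ₁' - χ₁| < ρ → ∀ r₀ r₁ r₂ : ℝ, ∃ z₀ z₁ z₂ : ℤ, κ < (r₀ + z₀) + x' * (r₁ + z₁) ∧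
        |((r₀ + z₀) + x' * (r₁ + z₁)) * ((r₁ + z₁) - k' * ((r₀ + z₀) + x' * (r₁ + z₁))) *
          (χ₀' * (r₀ + z₀) + χ₁' * (r₁ + z₁) + (r₂ + z₂))| < ε := by
  let P : ℝ × ℝ × ℝ × ℝ × ℝ → ℝ × ℝ × ℝ → Prop := fun q r =>
    ∃ z₀ z₁ z₂ : ℤ, q.1 < (r.1 + z₀) + q.2.1 * (r.2.1 + z₁) ∧
      |((r.1 + z₀) + q.2.1 * (r.2.1 + z₁)) *
        ((r.2.1 + z₁) - q.2.2.1 * ((r.1 + z₀) + q.2.1 * (r.2.1 + z₁))) *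
        (q.2.2.2.1 * (r.1 + z₀) + q.2.2.2.2 * (r.2.1 + z₁) + (r.2.2 + z₂))| < ε
  have hK : IsCompact (Set.Icc (0 : ℝ × ℝ × ℝ) 1) := isCompact_Icc
  have hev := hK.eventually_forall_of_forall_eventually (x₀ := ((0, x, k, χ₀, χ₁) : ℝ × ℝ × ℝ × ℝ × ℝ))
    (P := P) fun r _ => by
      obtain ⟨z₀, z₁, z₂, h0, hlt⟩ := h r.1 r.2.1 r.2.2
      have h1 : ∀ᶠ y : (ℝ × ℝ × ℝ × ℝ × ℝ) × (ℝ × ℝ × ℝ) in nhds ((0, x, k, χ₀, χ₁), r),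
          y.1.1 < (y.2.1 + z₀) + y.1.2.1 * (y.2.2.1 + z₁) :=
        (isOpen_lt (by fun_prop) (by fun_prop)).mem_nhds h0
      have h2 : ∀ᶠ y : (ℝ × ℝ × ℝ × ℝ × ℝ) × (ℝ × ℝ × ℝ) in nhds ((0, x, k, χ₀, χ₁), r),
          |((y.2.1 + z₀) + y.1.2.1 * (y.2.2.1 + z₁)) *
          ((y.2.2.1 + z₁) - y.1.2.2.1 * ((y.2.1 + z₀) + y.1.2.1 * (y.2.2.1 + z₁))) *
          (y.1.2.2.2.1 * (y.2.1 + z₀) + y.1.2.2.2.2 * (y.2.2.1 + z₁) + (y.2.2.2 + z₂))| < ε :=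
        (isOpen_lt (by fun_prop) (by fun_prop)).mem_nhds hlt
      filter_upwards [h1, h2] with y hy1 hy2 using ⟨z₀, z₁, z₂, hy1, hy2⟩
  obtain ⟨δ, hδ, hball⟩ := Metric.eventually_nhds_iff.1 hev
  refine ⟨δ, hδ, δ / 2, half_pos hδ, fun x' k' χ₀' χ₁' hx hk h0 h1 r₀ r₁ r₂ => ?_⟩
  obtain ⟨z₀, z₁, z₂, hz⟩ := @hball (δ / 2, x', k', χ₀', χ₁') (by
      simp only [Prod.dist_eq, Real.dist_eq, sub_zero, abs_of_pos (half_pos hδ)]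
      simp [hx, hk, h0, h1, hδ])
    (Int.fract r₀, Int.fract r₁, Int.fract r₂)
    ⟨⟨Int.fract_nonneg _, Int.fract_nonneg _, Int.fract_nonneg _⟩,
      ⟨(Int.fract_lt_one _).le, (Int.fract_lt_one _).le, (Int.fract_lt_one _).le⟩⟩
  refine ⟨z₀ - ⌊r₀⌋, z₁ - ⌊r₁⌋, z₂ - ⌊r₂⌋, ?_⟩
  have e : ∀ (r : ℝ) (z : ℤ), r + ((z - ⌊r⌋ : ℤ) : ℝ) = Int.fract r + z := fun r z => by
    rw [Int.fract]; push_cast; ring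
  rw [e, e, e]
  exact hz

/-- The targets around which every nearby lattice shape solves the covering problem. -/
theorem exists_open_target {ε : ℝ} (hε : 0 < ε) :
    ∃ x k χ₀ χ₁ : ℝ, Irrational x ∧ ∃ ρ > 0, ∃ κ > 0, ∀ x' k' χ₀' χ₁' : ℝ,
      |x' - x| < ρ → |k' - k| < ρ → |χ₀' - χ₀| < ρ → |χ₁' - χ₁| < ρ →
      ∀ r₀ r₁ r₂ : ℝ, ∃ z₀ z₁ z₂ : ℤ, κ < (r₀ + z₀) + x' * (r₁ + z₁) ∧
        |((r₀ + z₀) + x' * (r₁ + z₁)) * ((r₁ + z₁) - k' * ((r₀ + z₀) + x' * (r₁ + z₁))) *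
          (χ₀' * (r₀ + z₀) + χ₁' * (r₁ + z₁) + (r₂ + z₂))| < ε := by
  obtain ⟨x, k, χ₀, χ₁, hgood⟩ := CubicField.exists_isGood hε
  obtain ⟨ρ, hρ, κ, hκ, h⟩ := hgood.eventually
  obtain ⟨y, hy, hxy1, hxy2⟩ := exists_irrational_btwn (show x < x + ρ / 2 by linarith)
  refine ⟨y, k, χ₀, χ₁, hy, ρ / 2, half_pos hρ, κ, hκ, fun x' k' χ₀' χ₁' hx hk h0 h1 => ?_⟩
  refine h x' k' χ₀' χ₁' ?_ (by linarith) (by linarith) (by linarith)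
  rw [abs_lt] at hx ⊢
  constructor <;> linarith

/-- Recurrence of the orbit of `θ` to the `ρ`-neighbourhood of a target shape. -/
def IsRecurrent (x k χ₀ χ₁ ρ : ℝ) (θ : ℝ × ℝ) (C : ℝ) : Prop :=
  ∃ c d a b n n' : ℤ, C < c ∧ a * d - b * c = 1 ∧ |(d / c : ℝ) - x| < ρ ∧
    |c * (a - c * θ.1) - k| < ρ ∧ |θ.2 * c - n - χ₀| < ρ ∧ |θ.2 * d - n' - χ₁| < ρ

theorem exists_small_product {ε x k χ₀ χ₁ ρ κ : ℝ} (hκ : 0 < κ)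
    (htarget : ∀ x' k' χ₀' χ₁' : ℝ,
      |x' - x| < ρ → |k' - k| < ρ → |χ₀' - χ₀| < ρ → |χ₁' - χ₁| < ρ →
      ∀ r₀ r₁ r₂ : ℝ, ∃ z₀ z₁ z₂ : ℤ, κ < (r₀ + z₀) + x' * (r₁ + z₁) ∧
        |((r₀ + z₀) + x' * (r₁ + z₁)) * ((r₁ + z₁) - k' * ((r₀ + z₀) + x' * (r₁ + z₁))) *
          (χ₀' * (r₀ + z₀) + χ₁' * (r₁ + z₁) + (r₂ + z₂))| < ε)
    {θ : ℝ × ℝ} (hθ : ∀ C : ℝ, IsRecurrent x k χ₀ χ₁ ρ θ C) (η₁ η₂ : ℝ) :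
    ∃ᶠ q : ℕ in atTop, (q : ℝ) * nint (q * θ.1 - η₁) * nint (q * θ.2 - η₂) < ε := by
  rw [frequently_atTop]
  intro N
  obtain ⟨c, d, a, b, n, n', hC, hdet, hx, hk, h0, h1⟩ := hθ (max 0 (N / κ))
  have hc : (0 : ℝ) < c := (le_max_left _ _).trans_lt hC
  have hN : (N : ℝ) < c * κ := by
    have := (le_max_right _ _).trans_lt hC
    rwa [div_lt_iff₀ hκ] at this
  obtain ⟨z₀, z₁, z₂, hz, hprod⟩ := htarget _ _ _ _ hx hk h0 h1 (d * η₁) (-(c * η₁))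
    (n * (d * η₁) - n' * (c * η₁) - η₂)
  obtain ⟨q, hq_def⟩ : ∃ q : ℤ, q = c * z₀ + d * z₁ := ⟨_, rfl⟩
  have hq : (q : ℝ) = c * z₀ + d * z₁ := by rw [hq_def]; push_cast; ring
  have hdetR : (a * d - b * c : ℝ) = 1 := by exact_mod_cast hdet
  have e0 : d * η₁ + z₀ + d / c * (-(c * η₁) + z₁) = q / c := by
    rw [hq]; field_simp; ring
  have e1 : -(c * η₁) + z₁ - c * (a - c * θ.1) * (q / c)
      = c * (q * θ.1 - η₁ - ((a * z₀ + b * z₁ : ℤ) : ℝ)) := by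
    push_cast
    field_simp
    rw [hq]
    linear_combination (-z₁ : ℝ) * hdetR
  have e2 : (θ.2 * c - n) * (d * η₁ + z₀) + (θ.2 * d - n') * (-(c * η₁) + z₁)
      + (n * (d * η₁) - n' * (c * η₁) - η₂ + z₂)
      = q * θ.2 - η₂ - ((n * z₀ + n' * z₁ - z₂ : ℤ) : ℝ) := by
    push_cast
    rw [hq]
    ring
  rw [e0] at hz hprod
  rw [e1, e2] at hprod
  rw [lt_div_iff₀ hc, mul_comm] at hz
  have hqN : (N : ℝ) < q := hN.trans hz
  have hqN' : (N : ℤ) < q := by exact_mod_cast hqN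
  have hq0 : 0 ≤ q := by omega
  lift q to ℕ using hq0
  refine ⟨q, by omega, ?_⟩
  simp only [Int.cast_natCast] at hprod
  have e3 : (q : ℝ) / c * (c * (q * θ.1 - η₁ - ((a * z₀ + b * z₁ : ℤ) : ℝ)))
      * (q * θ.2 - η₂ - ((n * z₀ + n' * z₁ - z₂ : ℤ) : ℝ))
      = q * (q * θ.1 - η₁ - ((a * z₀ + b * z₁ : ℤ) : ℝ))
        * (q * θ.2 - η₂ - ((n * z₀ + n' * z₁ - z₂ : ℤ) : ℝ)) := by
    field_simp
  rw [e3, abs_mul, abs_mul, abs_of_nonneg (Nat.cast_nonneg q)] at hprod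
  refine lt_of_le_of_lt ?_ hprod
  have r1 : nint (q * θ.1 - η₁) ≤ _ := round_le (q * θ.1 - η₁) (a * z₀ + b * z₁)
  have r2 : nint (q * θ.2 - η₂) ≤ _ := round_le (q * θ.2 - η₂) (n * z₀ + n' * z₁ - z₂)
  have n1 : 0 ≤ nint (q * θ.1 - η₁) := abs_nonneg _
  have n2 : 0 ≤ nint (q * θ.2 - η₂) := abs_nonneg _
  gcongr

/-- A set meeting arbitrarily small intervals around every irrational in a fixed proportion
has full measure. -/
theorem ae_mem_of_proportion {S : Set ℝ} {c : ℝ} (hc : 0 < c)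
    (h : ∀ x : ℝ, Irrational x → ∀ ρ₀ > 0, ∃ ρ > 0, ρ < ρ₀ ∧ ∃ y,
      Metric.closedBall y (c * ρ) ⊆ S ∩ Metric.closedBall x ρ) :
    ∀ᵐ x : ℝ, x ∈ S := by
  have hirr : ∀ᵐ x : ℝ, Irrational x :=
    (Set.countable_range ((↑) : ℚ → ℝ)).ae_notMem volume
  have hfalse : ∀ᵐ x ∂(volume : Measure ℝ).restrict Sᶜ, False := by
    filter_upwards [Besicovitch.ae_tendsto_measure_inter_div (volume : Measure ℝ) Sᶜ,
      ae_restrict_of_ae hirr] with x hx hxi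
    have hlt : ENNReal.ofReal (1 - c) < 1 := by
      rw [← ENNReal.ofReal_one]
      exact (ENNReal.ofReal_lt_ofReal_iff one_pos).2 (by linarith)
    obtain ⟨ρ₀, hρ₀, hsub⟩ := mem_nhdsGT_iff_exists_Ioo_subset.1 (hx.eventually_const_lt hlt)
    obtain ⟨ρ, hρ, hρlt, y, hy⟩ := h x hxi ρ₀ hρ₀
    have hratio : ENNReal.ofReal (1 - c) <
        volume (Sᶜ ∩ Metric.closedBall x ρ) / volume (Metric.closedBall x ρ) := hsub ⟨hρ, hρlt⟩
    have hle : volume (Sᶜ ∩ Metric.closedBall x ρ) ≤ ENNReal.ofReal (2 * ρ - 2 * (c * ρ)) := by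
      have h1 : Sᶜ ∩ Metric.closedBall x ρ ⊆ Metric.closedBall x ρ \ Metric.closedBall y (c * ρ) :=
        fun z hz => ⟨hz.2, fun hzy => hz.1 (hy hzy).1⟩
      refine (measure_mono h1).trans ?_
      rw [measure_sdiff (fun z hz => (hy hz).2) measurableSet_closedBall.nullMeasurableSet
        measure_closedBall_lt_top.ne, Real.volume_closedBall, Real.volume_closedBall,
        ← ENNReal.ofReal_sub _ (by positivity)]
    have hcontra := hratio.trans_le (ENNReal.div_le_div_right hle _)
    rw [Real.volume_closedBall, ← ENNReal.ofReal_div_of_pos (by positivity),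
      show (2 * ρ - 2 * (c * ρ)) / (2 * ρ) = 1 - c by field_simp] at hcontra
    exact lt_irrefl _ hcontra
  have h0 : (volume : Measure ℝ).restrict Sᶜ = 0 := by
    simpa using hfalse
  rw [Measure.restrict_eq_zero] at h0
  exact h0

theorem exists_reduced_bezout {u v : ℤ} (hv : 0 < v) (h : IsCoprime u v) :
    ∃ m k : ℤ, m * u - v * k = 1 ∧ 0 ≤ m ∧ m < v := by
  obtain ⟨a, b, hab⟩ := h
  refine ⟨a % v, -(b + a / v * u), ?_, Int.emod_nonneg _ hv.ne', Int.emod_lt_of_pos _ hv⟩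
  have := Int.emod_add_mul_ediv a v
  linear_combination hab + u * this

theorem exists_coprime_approx {x : ℝ} (hx : Irrational x) (M : ℝ) :
    ∃ p Q : ℤ, M < Q ∧ 0 < Q ∧ IsCoprime p Q ∧ |x - p / Q| < 1 / (Q : ℝ) ^ 2 := by
  by_contra! hcon
  apply Real.infinite_rat_abs_sub_lt_one_div_den_sq_of_irrational hx
  obtain ⟨B, hB⟩ := exists_nat_gt M
  obtain ⟨A, hA⟩ := exists_nat_gt ((|x| + 1) * B)
  have hinj : Function.Injective fun q : ℚ => (q.num, q.den) := fun q r h => by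
    obtain ⟨h1, h2⟩ := Prod.mk.inj h
    exact Rat.ext h1 h2
  refine Set.Finite.subset (((Set.finite_Icc (-(A : ℤ)) A).prod (Set.finite_Iic B)).preimage
    hinj.injOn) fun q hq => ?_
  have hq : |x - q| < 1 / (q.den : ℝ) ^ 2 := hq
  have hden : (q.den : ℝ) ≤ M := by
    by_contra! hlt
    have := hcon q.num q.den (by exact_mod_cast hlt) (by exact_mod_cast q.den_pos)
      (by rw [Int.isCoprime_iff_gcd_eq_one]; simpa [Int.gcd] using q.reduced)
    rw [Int.cast_natCast, ← Rat.cast_def] at this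
    linarith
  have hdB : q.den ≤ B := by exact_mod_cast (hden.trans hB.le)
  have hd1 : (1 : ℝ) ≤ q.den := by exact_mod_cast q.den_pos
  have hqabs : |(q : ℝ)| ≤ |x| + 1 := by
    have h1 : 1 / (q.den : ℝ) ^ 2 ≤ 1 := by
      rw [div_le_one (by positivity)]; nlinarith
    have := abs_sub_abs_le_abs_sub (q : ℝ) x
    rw [abs_sub_comm] at this
    linarith
  have hnum : |(q.num : ℝ)| < A := by
    have e : (q.num : ℝ) = q * q.den := by
      rw [Rat.cast_def]; field_simp
    rw [e, abs_mul, abs_of_nonneg (by positivity : (0 : ℝ) ≤ q.den)]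
    refine lt_of_le_of_lt ?_ hA
    gcongr
  have hnum' : |q.num| < A := by exact_mod_cast hnum
  exact ⟨⟨(abs_lt.1 hnum').1.le, (abs_lt.1 hnum').2.le⟩, hdB⟩

theorem exists_coprime_near (x : ℝ) {δ : ℝ} (hδ : 0 < δ) :
    ∃ k m : ℤ, 0 < m ∧ IsCoprime k m ∧ |(k / m : ℝ) - x| < δ ∧ 1 / (m : ℝ) ^ 2 < δ := by
  obtain ⟨j, hj⟩ := pow_unbounded_of_one_lt (1 / δ) (one_lt_two : (1 : ℝ) < 2)
  have hpos : (0 : ℝ) < 2 ^ j := by positivity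
  rw [div_lt_iff₀ hδ] at hj
  refine ⟨2 * ⌊x * 2 ^ j⌋ + 1, 2 ^ (j + 1), by positivity, ?_, ?_, ?_⟩
  · exact IsCoprime.pow_right ⟨1, -⌊x * 2 ^ j⌋, by ring⟩
  · have h1 := Int.floor_le (x * 2 ^ j)
    have h2 := Int.lt_floor_add_one (x * 2 ^ j)
    push_cast
    rw [show (2 * (⌊x * 2 ^ j⌋ : ℝ) + 1) / 2 ^ (j + 1) - x
      = (2 * ⌊x * 2 ^ j⌋ + 1 - 2 * (x * 2 ^ j)) / 2 ^ (j + 1) by field_simp; ring, abs_div,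
      abs_of_pos (by positivity : (0 : ℝ) < 2 ^ (j + 1)), div_lt_iff₀ (by positivity), pow_succ]
    refine lt_of_le_of_lt (b := 1) ?_ (by linarith)
    rw [abs_le]
    constructor <;> linarith
  · push_cast
    have h1 : (1 : ℝ) ≤ 2 ^ j := one_le_pow₀ one_le_two
    have h2 : (2 : ℝ) ^ j ≤ (2 ^ (j + 1)) ^ 2 := by
      rw [pow_succ _ j]
      nlinarith
    rw [div_lt_iff₀ (by positivity)]
    nlinarith

theorem ae_exists_matrix_near (x k : ℝ) {δ : ℝ} (hδ : 0 < δ) (C : ℝ) :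
    ∀ᵐ θ : ℝ, ∃ c d a b : ℤ, C < c ∧ a * d - b * c = 1 ∧ |(d / c : ℝ) - x| < δ ∧
      |c * (a - c * θ) - k| < δ := by
  obtain ⟨k₂, m₂, hm₂, hcop, hkx, hm2⟩ := exists_coprime_near x (half_pos hδ)
  obtain ⟨m₁, k₁, hmk, hm₁0, hm₁lt⟩ := exists_reduced_bezout hm₂ hcop
  have hm₂R : (1 : ℝ) ≤ m₂ := by exact_mod_cast hm₂
  set D := 3 + |k| + δ with hD_def
  have hD : 0 < D := by positivity
  refine ae_mem_of_proportion (c := δ / (8 * m₂ ^ 2 * D)) (by positivity)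
    fun θ₀ hθ₀ ρ₀ hρ₀ => ?_
  obtain ⟨p, Q, hQM, hQ0, hpQ, happ⟩ := exists_coprime_approx hθ₀ (max C (D / ρ₀))
  obtain ⟨c₀, a₀, hca, hc₀0, hc₀lt⟩ := exists_reduced_bezout hQ0 hpQ.neg_left
  have hQR : (1 : ℝ) ≤ Q := by exact_mod_cast hQ0
  have hc₀R : (0 : ℝ) ≤ c₀ := by exact_mod_cast hc₀0
  have hc₀R' : (c₀ : ℝ) < Q := by exact_mod_cast hc₀lt
  have hm₁R : (0 : ℝ) ≤ m₁ := by exact_mod_cast hm₁0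
  have hm₁R' : (m₁ : ℝ) < m₂ := by exact_mod_cast hm₁lt
  have hmkR : (m₁ * k₂ - m₂ * k₁ : ℝ) = 1 := by exact_mod_cast hmk
  have hcaR : (c₀ * -p - Q * a₀ : ℝ) = 1 := by exact_mod_cast hca
  obtain ⟨c, hc⟩ : ∃ c : ℤ, c = c₀ * m₁ + Q * m₂ := ⟨_, rfl⟩
  have hcR : (c : ℝ) = c₀ * m₁ + Q * m₂ := by exact_mod_cast hc
  have hcge : (Q * m₂ : ℝ) ≤ c := by rw [hcR]; nlinarith [mul_nonneg hc₀R hm₁R]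
  have hcle : (c : ℝ) ≤ 2 * m₂ * Q := by
    rw [hcR]
    have : (c₀ : ℝ) * m₁ ≤ Q * m₂ := by gcongr
    linarith
  have hcQ : (Q : ℝ) ≤ c := by nlinarith
  have hcpos : (0 : ℝ) < c := by linarith
  have hmax := hQM
  rw [max_lt_iff] at hmax
  have hdetA : ((-a₀) * m₁ + p * m₂) * (c₀ * k₁ + Q * k₂)
      - ((-a₀) * k₁ + p * k₂) * c = 1 := by
    rw [hc]
    linear_combination (c₀ * -p - Q * a₀) * hmk + hca
  have hdc : |((c₀ * k₁ + Q * k₂ : ℤ) / c : ℝ) - x| < δ := by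
    have e : ((c₀ * k₁ + Q * k₂ : ℤ) / c : ℝ) - k₂ / m₂ = -(c₀ / (c * m₂)) := by
      push_cast
      field_simp
      rw [hcR]
      linear_combination (-c₀ : ℝ) * hmkR
    have h1 : (c₀ : ℝ) / (c * m₂) ≤ 1 / m₂ ^ 2 := by
      rw [div_le_div_iff₀ (by positivity) (by positivity)]
      nlinarith [mul_le_mul_of_nonneg_right hcge (by positivity : (0 : ℝ) ≤ m₂),
        mul_le_mul_of_nonneg_right hc₀R'.le (by positivity : (0 : ℝ) ≤ m₂ ^ 2)]
    have h2 : 0 ≤ (c₀ : ℝ) / (c * m₂) := by positivity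
    have h3 := abs_add_le (((c₀ * k₁ + Q * k₂ : ℤ) / c : ℝ) - k₂ / m₂) (k₂ / m₂ - x)
    rw [sub_add_sub_cancel, e, abs_neg, abs_of_nonneg h2] at h3
    linarith
  have hQ2 : (0 : ℝ) < Q ^ 2 := by positivity
  have hinv : 1 / (c : ℝ) ^ 2 ≤ 1 / Q ^ 2 := by gcongr
  refine ⟨D / Q ^ 2, by positivity, ?_,
    ((-a₀ * m₁ + p * m₂ : ℤ) : ℝ) / c - k / c ^ 2, fun θ hθ => ?_⟩
  · have : D < Q * ρ₀ := by
      have := hmax.2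
      rwa [div_lt_iff₀ hρ₀] at this
    rw [div_lt_iff₀ hQ2]
    nlinarith
  set y := ((-a₀ * m₁ + p * m₂ : ℤ) : ℝ) / c - k / c ^ 2 with hy
  have hθy : |θ - y| ≤ δ / 2 * (1 / c ^ 2) := by
    rw [Metric.mem_closedBall, Real.dist_eq] at hθ
    refine hθ.trans ?_
    rw [show δ / (8 * m₂ ^ 2 * D) * (D / Q ^ 2) = δ / 2 * (1 / (2 * m₂ * Q) ^ 2) by
      field_simp; norm_num]
    gcongr
  refine ⟨⟨c, c₀ * k₁ + Q * k₂, -a₀ * m₁ + p * m₂, -a₀ * k₁ + p * k₂, hmax.1.trans_le hcQ,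
    hdetA, hdc, ?_⟩, ?_⟩
  · have e : (c : ℝ) * (((-a₀ * m₁ + p * m₂ : ℤ) : ℝ) - c * θ) - k = -(c ^ 2 * (θ - y)) := by
      rw [hy]; field_simp; ring
    rw [e, abs_neg, abs_mul, abs_of_pos (by positivity)]
    calc (c : ℝ) ^ 2 * |θ - y| ≤ c ^ 2 * (δ / 2 * (1 / c ^ 2)) := by gcongr
      _ = δ / 2 := by field_simp
      _ < δ := by linarith
  · rw [Metric.mem_closedBall, Real.dist_eq]
    have e1 : y - p / Q = m₁ / (c * Q) - k * (1 / c ^ 2) := by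
      rw [hy]; push_cast; field_simp; rw [hcR]
      linear_combination (m₁ * (c₀ * m₁ + Q * m₂) : ℝ) * hcaR
    have h1 : (m₁ : ℝ) / (c * Q) ≤ 1 / Q ^ 2 := by
      rw [div_le_div_iff₀ (by positivity) (by positivity)]
      nlinarith [mul_le_mul_of_nonneg_right hcge (by positivity : (0 : ℝ) ≤ Q),
        mul_le_mul_of_nonneg_right hm₁R'.le (by positivity : (0 : ℝ) ≤ Q ^ 2)]
    have h2 : |y - p / Q| ≤ 1 / Q ^ 2 + |k| * (1 / Q ^ 2) := by
      rw [e1]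
      refine (abs_sub _ _).trans ?_
      rw [abs_of_nonneg (by positivity), abs_mul, abs_of_nonneg (by positivity : 0 ≤ 1 / (c : ℝ) ^ 2)]
      gcongr
    have h3 : |θ - θ₀| ≤ |θ - y| + |y - p / Q| + |θ₀ - p / Q| := by
      rw [abs_sub_comm θ₀]
      have := abs_add_three (θ - y) (y - p / Q) (p / Q - θ₀)
      rwa [show θ - y + (y - p / Q) + (p / Q - θ₀) = θ - θ₀ by ring] at this
    have h4 : δ / 2 * (1 / (c : ℝ) ^ 2) ≤ δ * (1 / Q ^ 2) := by
      gcongr; linarith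
    rw [hD_def, show (3 + |k| + δ) / (Q : ℝ) ^ 2
      = 3 * (1 / Q ^ 2) + |k| * (1 / Q ^ 2) + δ * (1 / Q ^ 2) by ring]
    have : 0 < 1 / (Q : ℝ) ^ 2 := by positivity
    linarith

/-- Multiples of an irrational number, with bounded coefficient, are dense modulo one. -/
theorem exists_bound_mul_add_near_int {x : ℝ} (hx : Irrational x) {δ : ℝ} (hδ : 0 < δ) :
    ∃ K : ℕ, ∀ t : ℝ, ∃ j : ℕ, j ≤ K ∧ ∃ m : ℤ, |j * x + t - m| < δ := by
  obtain ⟨n, hn⟩ := exists_nat_gt (1 / δ)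
  have hn0 : (0 : ℝ) < n := (by positivity : 0 < 1 / δ).trans hn
  obtain ⟨j₀, k, hk0, -, hle⟩ :=
    Real.exists_int_int_abs_mul_sub_le x (by exact_mod_cast hn0 : 0 < n)
  lift k to ℕ using hk0.le
  rw [Int.cast_natCast] at hle
  obtain ⟨β, hβ⟩ : ∃ β : ℝ, β = k * x - j₀ := ⟨_, rfl⟩
  rw [← hβ] at hle
  have hβδ : |β| < δ := by
    refine hle.trans_lt ?_
    rw [div_lt_iff₀ (by positivity)]
    rw [div_lt_iff₀ hδ] at hn
    linarith
  have hβ0 : β ≠ 0 := by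
    rw [hβ]
    have hk : (k : ℤ) ≠ 0 := hk0.ne'
    exact ((hx.natCast_mul (by exact_mod_cast hk)).sub_intCast j₀).ne_zero
  have hβpos := abs_pos.2 hβ0
  have key : ∀ s : ℝ, 0 ≤ s → s ≤ 1 → ∃ i : ℕ, i ≤ ⌈1 / |β|⌉₊ ∧ |i * |β| - s| < δ := by
    intro s hs0 hs1
    have h1 := Nat.floor_le (div_nonneg hs0 hβpos.le)
    have h2 := Nat.lt_floor_add_one (s / |β|)
    rw [le_div_iff₀ hβpos] at h1
    rw [div_lt_iff₀ hβpos] at h2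
    refine ⟨⌊s / |β|⌋₊, ?_, ?_⟩
    · exact (Nat.floor_le_ceil _).trans (Nat.ceil_mono (by gcongr))
    · rw [abs_lt]
      constructor <;> nlinarith
  refine ⟨⌈1 / |β|⌉₊ * k, fun t => ?_⟩
  rcases abs_cases β with ⟨hab, -⟩ | ⟨hab, -⟩
  · obtain ⟨i, hi, hlt⟩ := key (⌈t⌉ - t) (by linarith [Int.le_ceil t])
      (by linarith [Int.ceil_lt_add_one t])
    refine ⟨i * k, by gcongr, ⌈t⌉ + i * j₀, ?_⟩
    rw [hab, hβ] at hlt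
    push_cast
    convert hlt using 2
    ring
  · obtain ⟨i, hi, hlt⟩ := key (t - ⌊t⌋) (by linarith [Int.floor_le t])
      (by linarith [Int.lt_floor_add_one t])
    refine ⟨i * k, by gcongr, ⌊t⌋ + i * j₀, ?_⟩
    rw [hab, hβ, ← abs_neg] at hlt
    push_cast
    convert hlt using 2
    ring

theorem ae_isRecurrent_snd {x k χ₀ χ₁ ρ θ₁ : ℝ} (hx : Irrational x) (hρ : 0 < ρ)
    (hθ₁ : ∀ δ > 0, ∀ C : ℝ, ∃ c d a b : ℤ, C < c ∧ a * d - b * c = 1 ∧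
      |(d / c : ℝ) - x| < δ ∧ |c * (a - c * θ₁) - k| < δ) (C : ℝ) :
    ∀ᵐ θ₂ : ℝ, IsRecurrent x k χ₀ χ₁ ρ (θ₁, θ₂) C := by
  obtain ⟨K, hK⟩ := exists_bound_mul_add_near_int hx (show 0 < ρ / 4 by positivity)
  obtain ⟨f₀, hf₀, hf₁, hfρ, hfx⟩ : ∃ f₀ : ℝ, 0 < f₀ ∧ f₀ ≤ 1 ∧ f₀ < ρ ∧ f₀ * |x| ≤ ρ / 4 := by
    have h0 : 0 < ρ / (4 * (1 + |x|)) := by positivity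
    refine ⟨min 1 (ρ / (4 * (1 + |x|))), by positivity, min_le_left _ _, ?_, ?_⟩
    · refine (min_le_right _ _).trans_lt ?_
      rw [div_lt_iff₀ (by positivity)]
      nlinarith [abs_nonneg x, mul_nonneg hρ.le (abs_nonneg x)]
    · refine (mul_le_mul_of_nonneg_right (min_le_right _ _) (abs_nonneg x)).trans ?_
      rw [div_mul_eq_mul_div, div_le_div_iff₀ (by positivity) (by positivity)]
      nlinarith [abs_nonneg x]
  refine ae_mem_of_proportion (S := {θ₂ | IsRecurrent x k χ₀ χ₁ ρ (θ₁, θ₂) C})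
    (c := f₀ / (K + 2)) (by positivity) fun θ₀ _ ρ₀ hρ₀ => ?_
  obtain ⟨c, d, a, b, hc, hdet, hdx, hak⟩ := hθ₁ (min ρ (ρ / (4 * (K + 2)))) (by positivity)
    (max (max 0 C) ((K + 2) / ρ₀))
  obtain ⟨hc', hcρ⟩ := max_lt_iff.1 hc
  obtain ⟨hc0, hcC⟩ := max_lt_iff.1 hc'
  obtain ⟨hdx1, hdx2⟩ := lt_min_iff.1 hdx
  rw [div_lt_iff₀ hρ₀] at hcρ
  obtain ⟨u, hu0, hu1, N, hN⟩ : ∃ u : ℝ, 0 ≤ u ∧ u ≤ 1 ∧ ∃ N : ℤ, u = N + χ₀ - c * θ₀ :=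
    ⟨⌈c * θ₀ - χ₀⌉ + χ₀ - c * θ₀, by linarith [Int.le_ceil (c * θ₀ - χ₀)],
      by linarith [Int.ceil_lt_add_one (c * θ₀ - χ₀)], _, rfl⟩
  obtain ⟨j, hjK, n', hn'⟩ := hK (d * θ₀ + u * x - χ₁)
  have hjK' : (j : ℝ) ≤ K := by exact_mod_cast hjK
  refine ⟨(K + 2) / c, by positivity, by rwa [div_lt_iff₀ hc0, mul_comm],
    θ₀ + (u + j) / c, fun θ hθ => ?_⟩
  obtain ⟨f, hf⟩ : ∃ f : ℝ, f = c * (θ - (θ₀ + (u + j) / c)) := ⟨_, rfl⟩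
  have hθf : θ = θ₀ + (u + j + f) / c := by
    rw [hf]; field_simp; ring
  have hff : |f| ≤ f₀ := by
    rw [Metric.mem_closedBall, Real.dist_eq] at hθ
    rw [hf, abs_mul, abs_of_pos hc0]
    calc c * |θ - (θ₀ + (u + j) / c)| ≤ c * (f₀ / (K + 2) * ((K + 2) / c)) := by gcongr
      _ = f₀ := by field_simp
  have hsum : |u + j + f| ≤ K + 2 := by
    have := abs_le.1 hff
    rw [abs_le]
    have : (0 : ℝ) ≤ j := Nat.cast_nonneg j
    constructor <;> linarith
  refine ⟨⟨c, d, a, b, N + j, n', hcC, hdet, hdx1, hak.trans_le (min_le_left _ _), ?_, ?_⟩, ?_⟩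
  · have e : θ * c - ((N + j : ℤ) : ℝ) - χ₀ = f := by
      rw [hθf, hN]; push_cast; field_simp; ring
    rw [e]
    exact hff.trans_lt hfρ
  · have e : θ * d - n' - χ₁ = (j * x + (d * θ₀ + u * x - χ₁) - n') + f * x
        + (u + j + f) * (d / c - x) := by
      rw [hθf]; field_simp; ring
    have h1 : |f * x| ≤ ρ / 4 := by
      rw [abs_mul]
      exact (by gcongr : |f| * |x| ≤ f₀ * |x|).trans hfx
    have h2 : |(u + j + f) * (d / c - x)| ≤ ρ / 4 := by
      rw [abs_mul]
      calc |u + j + f| * |(d / c - x : ℝ)| ≤ (K + 2) * (ρ / (4 * (K + 2))) := by gcongr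
        _ = ρ / 4 := by field_simp
    have h3 := abs_add_three (j * x + (d * θ₀ + u * x - χ₁) - n') (f * x)
      ((u + j + f) * (d / c - x))
    rw [e]
    linarith
  · rw [Metric.mem_closedBall, Real.dist_eq, hθf, add_sub_cancel_left, abs_div, abs_of_pos hc0]
    gcongr

theorem isOpen_isRecurrent (x k χ₀ χ₁ ρ C : ℝ) :
    IsOpen {θ : ℝ × ℝ | IsRecurrent x k χ₀ χ₁ ρ θ C} := by
  simp only [IsRecurrent, Set.ofPred_exists, Set.ofPred_and]
  refine isOpen_iUnion fun c => isOpen_iUnion fun d => isOpen_iUnion fun a => isOpen_iUnion fun b =>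
    isOpen_iUnion fun n => isOpen_iUnion fun n' => ?_
  exact isOpen_const.inter <| isOpen_const.inter <| isOpen_const.inter <|
    (isOpen_lt (by fun_prop) continuous_const).inter <|
    (isOpen_lt (by fun_prop) continuous_const).inter (isOpen_lt (by fun_prop) continuous_const)

theorem ae_isRecurrent {x : ℝ} (hx : Irrational x) (k χ₀ χ₁ : ℝ) {ρ : ℝ} (hρ : 0 < ρ) :
    ∀ᵐ θ : ℝ × ℝ, ∀ C : ℝ, IsRecurrent x k χ₀ χ₁ ρ θ C := by
  have hmatrix : ∀ᵐ θ₁ : ℝ, ∀ m N : ℕ, ∃ c d a b : ℤ, (N : ℝ) < c ∧ a * d - b * c = 1 ∧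
      |(d / c : ℝ) - x| < 1 / (m + 1) ∧ |c * (a - c * θ₁) - k| < 1 / (m + 1) :=
    ae_all_iff.2 fun m => ae_all_iff.2 fun N =>
      ae_exists_matrix_near x k (by positivity : (0 : ℝ) < 1 / (m + 1)) N
  have hnat : ∀ᵐ θ : ℝ × ℝ, ∀ N : ℕ, IsRecurrent x k χ₀ χ₁ ρ θ N := by
    refine ae_all_iff.2 fun N => ?_
    rw [Measure.volume_eq_prod]
    refine (Measure.ae_prod_mem_iff_ae_ae_mem
      (isOpen_isRecurrent x k χ₀ χ₁ ρ N).measurableSet).2 ?_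
    filter_upwards [hmatrix] with θ₁ hθ₁
    refine ae_isRecurrent_snd hx hρ (fun δ hδ C => ?_) N
    obtain ⟨m, hm⟩ := exists_nat_one_div_lt hδ
    obtain ⟨M, hM⟩ := exists_nat_gt C
    obtain ⟨c, d, a, b, hc, hdet, h1, h2⟩ := hθ₁ m M
    exact ⟨c, d, a, b, hM.trans hc, hdet, h1.trans hm, h2.trans hm⟩
  filter_upwards [hnat] with θ hθ C
  obtain ⟨N, hN⟩ := exists_nat_gt C
  obtain ⟨c, d, a, b, n, n', hc, h⟩ := hθ N
  exact ⟨c, d, a, b, n, n', hN.trans hc, h⟩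

/-- Shapira's theorem: almost every pair satisfies the inhomogeneous Littlewood property. -/
theorem stmt5 :
    ∀ᵐ θ ∂(volume : Measure (ℝ × ℝ)), ∀ η₁ η₂ : ℝ, ∀ ε : ℝ, 0 < ε →
      ∃ᶠ q : ℕ in atTop, (q : ℝ) * nint (q * θ.1 - η₁) * nint (q * θ.2 - η₂) < ε := by
  have hall : ∀ᵐ θ : ℝ × ℝ, ∀ m : ℕ, ∀ η₁ η₂ : ℝ,
      ∃ᶠ q : ℕ in atTop,
        (q : ℝ) * nint (q * θ.1 - η₁) * nint (q * θ.2 - η₂) < 1 / ((m : ℝ) + 1) := by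
    refine ae_all_iff.2 fun m => ?_
    obtain ⟨x, k, χ₀, χ₁, hx, ρ, hρ, κ, hκ, htarget⟩ :=
      exists_open_target (by positivity : (0 : ℝ) < 1 / (m + 1))
    filter_upwards [ae_isRecurrent hx k χ₀ χ₁ hρ] with θ hθ
    exact exists_small_product hκ htarget hθ
  filter_upwards [hall] with θ hθ η₁ η₂ ε hε
  obtain ⟨m, hm⟩ := exists_nat_one_div_lt hε
  exact (hθ m η₁ η₂).mono fun q hq => hq.trans hm
end

section
/- Suppose the real numbers θ_1 and θ_2 are linearly dependent over ℤ together with 1, i.e. there exist integers (a, b, c) ≠ (0, 0, 0) with aθ_1 + bθ_2 + c = 0. Then there exist real numbers η_1, η_2 such that inf_{x ∈ ℤ_{>0}} x · ‖xθ_1 − η_1‖ · ‖xθ_2 − η_2‖ > 0. -/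
open Filter

/-- Minimal denominators `q i` of approximations to `θ` with error at most `4⁻ⁱ`: whenever the
denominator changes, it is comparable with `4ⁱ`. -/
theorem exists_denominators (θ : ℝ) :
    ∃ q : ℕ → ℕ, (∀ i, 0 < q i) ∧ (∀ i, q i ≤ 4 ^ i) ∧
      (∀ i, ∃ p : ℤ, |(q i : ℝ) * θ - p| ≤ 1 / 4 ^ i) ∧
      ∀ i, q (i + 1) = q i ∨ 4 ^ (i + 1) ≤ 5 * q (i + 1) := by
  classical
  have hex : ∀ i : ℕ, ∃ k : ℕ, (0 < k ∧ ∃ p : ℤ, |(k : ℝ) * θ - p| ≤ 1 / 4 ^ i) ∧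
      k ≤ 4 ^ i := by
    intro i
    obtain ⟨j, k, hk, hkn, h⟩ :=
      Real.exists_int_int_abs_mul_sub_le θ (n := 4 ^ i) (by positivity)
    lift k to ℕ using hk.le
    refine ⟨k, ⟨by exact_mod_cast hk, j, ?_⟩, by exact_mod_cast hkn⟩
    push_cast at h
    refine h.trans ?_
    gcongr
    linarith
  have hex' : ∀ i : ℕ, ∃ k : ℕ, 0 < k ∧ ∃ p : ℤ, |(k : ℝ) * θ - p| ≤ 1 / 4 ^ i :=
    fun i => (hex i).imp fun _ h => h.1
  refine ⟨fun i => Nat.find (hex' i), fun i => (Nat.find_spec (hex' i)).1, fun i => ?_,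
    fun i => (Nat.find_spec (hex' i)).2, fun i => ?_⟩
  · obtain ⟨k, hk, hle⟩ := hex i
    exact (Nat.find_min' (hex' i) hk).trans hle
  · obtain ⟨hr, p, hp⟩ := Nat.find_spec (hex' i)
    obtain ⟨hs, p', hp'⟩ := Nat.find_spec (hex' (i + 1))
    have hmin := fun k hk => Nat.find_min' (hex' (i + 1)) (m := k) hk
    have hpow : (1 : ℝ) / 4 ^ i = 4 * (1 / 4 ^ (i + 1)) := by rw [pow_succ]; field_simp
    have hpos : (0 : ℝ) < 1 / 4 ^ (i + 1) := by positivity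
    have hmono : Nat.find (hex' i) ≤ Nat.find (hex' (i + 1)) :=
      Nat.find_min' (hex' i) ⟨hs, p', hp'.trans (by rw [hpow]; linarith)⟩
    dsimp only
    generalize Nat.find (hex' i) = r at *
    generalize Nat.find (hex' (i + 1)) = s at *
    rcases hmono.eq_or_lt with h | hlt
    · exact Or.inl h.symm
    right
    have hr' : (0 : ℝ) < r := by exact_mod_cast hr
    have hs' : (0 : ℝ) < s := by exact_mod_cast hs
    have hrs : (r : ℝ) < s := by exact_mod_cast hlt
    by_cases hdet : (s : ℤ) * p - r * p' = 0
    · exfalso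
      have hdet' : (s : ℝ) * p - r * p' = 0 := by exact_mod_cast hdet
      have hbad := hmin (s - r) ⟨by omega, p' - p, by
        refine le_trans ?_ hp'
        rw [Nat.cast_sub hlt.le]
        push_cast
        have e : (s : ℝ) * (((s : ℝ) - r) * θ - (p' - p)) = (s - r) * (s * θ - p') := by
          linear_combination hdet'
        have e' := congrArg abs e
        rw [abs_mul, abs_mul, abs_of_pos hs', abs_of_pos (sub_pos.2 hrs)] at e'
        have := abs_nonneg ((s : ℝ) * θ - p')
        refine le_of_mul_le_mul_left ?_ hs'
        rw [e']
        gcongr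
        linarith⟩
      omega
    · have h1 : (1 : ℝ) ≤ |(s : ℝ) * p - r * p'| := by exact_mod_cast Int.one_le_abs hdet
      have e : (s : ℝ) * p - r * p' = r * (s * θ - p') - s * (r * θ - p) := by ring
      have h2 : |(s : ℝ) * p - r * p'| ≤ r * |s * θ - p'| + s * |r * θ - p| := by
        rw [e]
        refine (abs_sub _ _).trans ?_
        rw [abs_mul, abs_mul, abs_of_pos hs', abs_of_pos hr']
      have h3 : (r : ℝ) * |s * θ - p'| ≤ s * (1 / 4 ^ (i + 1)) := by gcongr
      have h4 : (s : ℝ) * |r * θ - p| ≤ s * (4 * (1 / 4 ^ (i + 1))) := by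
        rw [← hpow]; gcongr
      have h5 : (1 : ℝ) ≤ 5 * s / 4 ^ (i + 1) := by
        have : (5 * s / 4 ^ (i + 1) : ℝ) = s * (1 / 4 ^ (i + 1)) + s * (4 * (1 / 4 ^ (i + 1))) := by
          ring
        linarith
      rw [le_div_iff₀ (by positivity), one_mul] at h5
      exact_mod_cast h5

/-- One of the two extreme quarters of a short interval has all its `q`-multiples away from `ℤ`. -/
theorem exists_quarter_away_from_int (q u L : ℝ) (hq : 0 < q) (hL : 0 < L)
    (h1 : 1 / 10 ≤ q * L) (h2 : q * L ≤ 1 / 2) :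
    ∃ v, u ≤ v ∧ v + L / 4 ≤ u + L ∧
      ∀ t, v ≤ t → t ≤ v + L / 4 → ∀ m : ℤ, 1 / 50 ≤ |q * t - m| := by
  by_contra! H
  obtain ⟨t, ht1, ht2, m, hm⟩ := H u le_rfl (by linarith)
  obtain ⟨t', ht1', ht2', m', hm'⟩ := H (u + 3 * L / 4) (by linarith) (by linarith)
  rw [abs_lt] at hm hm'
  have ha : q * (L / 2) ≤ q * (t' - t) := by gcongr; linarith
  have hb : q * (t' - t) ≤ q * L := by gcongr; linarith
  have hlt : m' - m < 1 := by
    have : (m' - m : ℝ) < 1 := by linarith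
    exact_mod_cast this
  have hgt : 0 < m' - m := by
    have : (0 : ℝ) < m' - m := by linarith
    exact_mod_cast this
  omega

theorem exists_mul_away_from_int (q : ℕ → ℕ) (hq : ∀ i, 0 < q i) (hle : ∀ i, q i ≤ 4 ^ i)
    (hstep : ∀ i, q (i + 1) = q i ∨ 4 ^ (i + 1) ≤ 5 * q (i + 1)) :
    ∃ η : ℝ, ∀ i, ∀ m : ℤ, 1 / 50 ≤ |q i * η - m| := by
  have hnext : ∀ (i : ℕ) (u : ℝ), ∃ v, u ≤ v ∧ v + 1 / 2 / 4 ^ (i + 1) ≤ u + 1 / 2 / 4 ^ i ∧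
      (4 ^ i ≤ 5 * q i → ∀ t, v ≤ t → t ≤ v + 1 / 2 / 4 ^ (i + 1) →
        ∀ m : ℤ, 1 / 50 ≤ |q i * t - m|) := by
    intro i u
    have e : (1 / 2 / 4 ^ (i + 1) : ℝ) = 1 / 2 / 4 ^ i / 4 := by rw [pow_succ]; field_simp
    have hp : (0 : ℝ) < 1 / 2 / 4 ^ i := by positivity
    rw [e]
    by_cases h : 4 ^ i ≤ 5 * q i
    · have h' : (4 : ℝ) ^ i ≤ 5 * q i := by exact_mod_cast h
      have h'' : (q i : ℝ) ≤ 4 ^ i := by exact_mod_cast hle i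
      obtain ⟨v, hv1, hv2, hv3⟩ := exists_quarter_away_from_int (q i) u (1 / 2 / 4 ^ i)
        (by exact_mod_cast hq i) hp
        (by rw [← mul_div_assoc, le_div_iff₀ (by positivity)]; linarith)
        (by rw [← mul_div_assoc, div_le_iff₀ (by positivity)]; linarith)
      exact ⟨v, hv1, hv2, fun _ => hv3⟩
    · exact ⟨u, le_rfl, by linarith, fun h' => absurd h' h⟩
  choose f hf1 hf2 hf3 using hnext
  let u : ℕ → ℝ := fun n => Nat.rec 0 f n
  have hu : ∀ i, u (i + 1) = f i (u i) := fun _ => rfl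
  have hmono : Monotone u := monotone_nat_of_le_succ fun i => hf1 i (u i)
  have hanti : Antitone fun i => u i + 1 / 2 / 4 ^ i :=
    antitone_nat_of_succ_le fun i => hf2 i (u i)
  have hlt : ∀ i j, u i ≤ u j + 1 / 2 / 4 ^ j := by
    intro i j
    have h1 := hmono (le_max_left i j)
    have h2 := hanti (le_max_right i j)
    have h3 : (0 : ℝ) < 1 / 2 / 4 ^ max i j := by positivity
    dsimp only at h2
    linarith
  have hbdd : BddAbove (Set.range u) := ⟨_, by rintro _ ⟨i, rfl⟩; exact hlt i 0⟩
  refine ⟨⨆ i, u i, fun i => ?_⟩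
  have hgood : ∀ i, 4 ^ i ≤ 5 * q i → ∀ m : ℤ, 1 / 50 ≤ |q i * (⨆ i, u i) - m| :=
    fun i h => hf3 i (u i) h _ (le_ciSup hbdd (i + 1)) (ciSup_le fun j => hlt j (i + 1))
  induction i with
  | zero => exact hgood 0 (by have := hq 0; simp; omega)
  | succ i ih =>
    rcases hstep i with h | h
    · rwa [h]
    · exact hgood _ h

/-- For every `θ` there is a badly approximable inhomogeneous shift `η`. -/
theorem exists_badly_approximable_shift (θ : ℝ) :
    ∃ η c : ℝ, 0 < c ∧ ∀ x : ℕ, 0 < x → ∀ m : ℤ, c ≤ x * |x * θ - η - m| := by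
  obtain ⟨q, hq, hle, happrox, hstep⟩ := exists_denominators θ
  obtain ⟨η, hη⟩ := exists_mul_away_from_int q hq hle hstep
  refine ⟨η, 1 / 102400, by norm_num, fun x hx m => ?_⟩
  obtain ⟨n, hn1, hn2⟩ := exists_nat_pow_near (x := x) (y := 4) hx (by norm_num)
  have hn1' : (4 : ℝ) ^ n ≤ x := by exact_mod_cast hn1
  have hn2' : (x : ℝ) < 4 ^ (n + 1) := by exact_mod_cast hn2
  have hx' : (0 : ℝ) < x := by exact_mod_cast hx
  have hpow : (4 : ℝ) ^ (n + 5) = 1024 * 4 ^ n := by ring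
  have hpow' : (4 : ℝ) ^ (n + 5) = 256 * 4 ^ (n + 1) := by ring
  obtain ⟨p, hp⟩ := happrox (n + 5)
  have hQle : (q (n + 5) : ℝ) ≤ 4 ^ (n + 5) := by exact_mod_cast hle (n + 5)
  have hQ : (0 : ℝ) < q (n + 5) := by exact_mod_cast hq (n + 5)
  have hd := hη (n + 5) (x * p - q (n + 5) * m)
  push_cast at hd
  have e : (q (n + 5) : ℝ) * η - (x * p - q (n + 5) * m) =
      x * (q (n + 5) * θ - p) - q (n + 5) * (x * θ - η - m) := by ring
  rw [e] at hd
  have htri := hd.trans (abs_sub _ _)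
  rw [abs_mul, abs_mul, abs_of_pos hx', abs_of_pos hQ] at htri
  have hsmall : (x : ℝ) * |q (n + 5) * θ - p| ≤ 1 / 100 := by
    calc (x : ℝ) * |q (n + 5) * θ - p| ≤ x * (1 / 4 ^ (n + 5)) := by gcongr
      _ ≤ 1 / 100 := by
        rw [mul_one_div, div_le_iff₀ (by positivity)]
        linarith
  have hbig : (q (n + 5) : ℝ) * |x * θ - η - m| ≤ 1024 * x * |x * θ - η - m| := by
    gcongr
    linarith
  linarith

theorem half_le_abs_int_sub_half (k : ℤ) : 1 / 2 ≤ |(k : ℝ) - 1 / 2| := by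
  rcases le_or_gt k 0 with hk | hk
  · have : (k : ℝ) ≤ 0 := by exact_mod_cast hk
    exact le_abs.2 (Or.inr (by linarith))
  · have : (1 : ℝ) ≤ k := by exact_mod_cast hk
    exact le_abs.2 (Or.inl (by linarith))

theorem exists_shifts_of_rational_left (θ₁ θ₂ : ℝ) (a c : ℤ) (ha : a ≠ 0)
    (h : (a : ℝ) * θ₁ + c = 0) :
    ∃ η₁ η₂ : ℝ, ∃ c : ℝ, 0 < c ∧ ∀ x : ℕ, 0 < x →
      c ≤ (x : ℝ) * nint (x * θ₁ - η₁) * nint (x * θ₂ - η₂) := by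
  obtain ⟨η, d, hd, hη⟩ := exists_badly_approximable_shift θ₂
  have ha' : (0 : ℝ) < |(a : ℝ)| := by simpa using ha
  have ha0 : (a : ℝ) ≠ 0 := by exact_mod_cast ha
  refine ⟨1 / (2 * a), η, d / (2 * |(a : ℝ)|), by positivity, fun x hx => ?_⟩
  have h2 := hη x hx (round (x * θ₂ - η))
  unfold nint
  set m := round ((x : ℝ) * θ₁ - 1 / (2 * a))
  have h1 : 1 / 2 ≤ |(a : ℝ)| * |x * θ₁ - 1 / (2 * a) - m| := by
    have e : (a : ℝ) * (x * θ₁ - 1 / (2 * a) - m) = ((-c * x - a * m : ℤ) : ℝ) - 1 / 2 := by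
      push_cast
      field_simp
      linear_combination (2 * x : ℝ) * h
    rw [← abs_mul, e]
    exact half_le_abs_int_sub_half _
  rw [div_le_iff₀ (by positivity)]
  nlinarith [mul_le_mul h1 h2 hd.le (by positivity)]

/-- Khintchine's theorem on rationally dependent pairs. -/
theorem stmt7 (θ₁ θ₂ : ℝ)
    (hdep : ∃ a b c : ℤ, ¬(a = 0 ∧ b = 0 ∧ c = 0) ∧
      (a : ℝ) * θ₁ + (b : ℝ) * θ₂ + (c : ℝ) = 0) :
    ∃ η₁ η₂ : ℝ, ∃ c : ℝ, 0 < c ∧ ∀ x : ℕ, 0 < x →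
      c ≤ (x : ℝ) * nint (x * θ₁ - η₁) * nint (x * θ₂ - η₂) := by
  obtain ⟨a, b, c, hne, h⟩ := hdep
  by_cases hb : b = 0
  · have ha : a ≠ 0 := by
      rintro rfl
      refine hne ⟨rfl, hb, ?_⟩
      simpa [hb] using h
    exact exists_shifts_of_rational_left θ₁ θ₂ a c ha (by simpa [hb] using h)
  by_cases ha : a = 0
  · obtain ⟨η₂, η₁, d, hd, hη⟩ :=
      exists_shifts_of_rational_left θ₂ θ₁ b c hb (by simpa [ha] using h)
    exact ⟨η₁, η₂, d, hd, fun x hx => (hη x hx).trans_eq (mul_right_comm _ _ _)⟩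
  obtain ⟨η, d, hd, hη⟩ := exists_badly_approximable_shift (2 * a * θ₁)
  have ha0 : (a : ℝ) ≠ 0 := by exact_mod_cast ha
  have hb0 : (b : ℝ) ≠ 0 := by exact_mod_cast hb
  have ha' : 0 < |(a : ℝ)| := abs_pos.2 ha0
  have hb' : 0 < |(b : ℝ)| := abs_pos.2 hb0
  refine ⟨η / (2 * a), (1 - η) / (2 * b), d / (8 * |(a : ℝ)| * |(b : ℝ)|), by positivity,
    fun x hx => ?_⟩
  unfold nint
  set m₁ := round ((x : ℝ) * θ₁ - η / (2 * a))
  set m₂ := round ((x : ℝ) * θ₂ - (1 - η) / (2 * b))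
  set α : ℝ := x * θ₁ - η / (2 * a) - m₁ with hα
  set β : ℝ := x * θ₂ - (1 - η) / (2 * b) - m₂ with hβ
  have eα : 2 * (a * α) = x * (2 * a * θ₁) - η - (2 * a * m₁ : ℤ) := by
    rw [hα]; push_cast; field_simp
  have eβ : -(2 * (b * β)) = x * (2 * a * θ₁) - η - (-2 * c * x - 1 - 2 * b * m₂ : ℤ) := by
    rw [hβ]; push_cast; field_simp
    linear_combination (-2 * x : ℝ) * h
  have eαβ : a * α + b * β = ((-c * x - a * m₁ - b * m₂ : ℤ) : ℝ) - 1 / 2 := by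
    push_cast at eα eβ ⊢
    linear_combination eα / 2 - eβ / 2
  have h₁ := hη x hx (2 * a * m₁)
  have h₂ := hη x hx (-2 * c * x - 1 - 2 * b * m₂)
  rw [← eα, abs_mul, abs_mul, abs_two] at h₁
  rw [← eβ, abs_neg, abs_mul, abs_mul, abs_two] at h₂
  have h₃ := (half_le_abs_int_sub_half (-c * x - a * m₁ - b * m₂)).trans_eq
    (congrArg abs eαβ).symm |>.trans (abs_add_le _ _)
  rw [abs_mul, abs_mul] at h₃
  rw [div_le_iff₀ (by positivity)]
  have hA : 0 ≤ |(a : ℝ)| * |α| := by positivity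
  have hB : 0 ≤ |(b : ℝ)| * |β| := by positivity
  have e : (x : ℝ) * |α| * |β| * (8 * |(a : ℝ)| * |(b : ℝ)|) =
      8 * (x * ((|(a : ℝ)| * |α|) * (|(b : ℝ)| * |β|))) := by ring
  rw [e]
  generalize |(a : ℝ)| * |α| = A at *
  generalize |(b : ℝ)| * |β| = B at *
  rcases le_total (1 / 4) A with h' | h'
  · nlinarith [mul_le_mul h' h₂ hd.le hA]
  · have h'' : 1 / 4 ≤ B := by linarith
    nlinarith [mul_le_mul h'' h₁ hd.le hB]
end

section
/- There exists an absolute constant γ' > 0 with the following property: for every real M ≥ 2, every sequence of positive real numbers t_1, t_2, t_3, ... satisfying t_{j+1}/t_j ≥ 1 + 1/M for all j ≥ 1, and every sequence of real numbers η_1, η_2, η_3, ..., there exists a real number α such that ‖α t_j − η_j‖ ≥ γ' / (M log M) for all j ≥ 1. -/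
open Filter

/-- The reals `x` for which `x * t - η` is within `ε` of an integer. -/
def nearInt (t η ε : ℝ) : Set ℝ := {x | ∃ m : ℤ, |x * t - η - m| < ε}

/-- A set is a union of half-open dyadic intervals of length `2 ^ (-L)`. -/
def IsDyadic (L : ℕ) (S : Set ℝ) : Prop :=
  ∀ x y : ℝ, ⌊x * 2 ^ L⌋ = ⌊y * 2 ^ L⌋ → x ∈ S → y ∈ S

/-- The union of the dyadic intervals of length `2 ^ (-L)` meeting `S`. -/
def dyadicHull (L : ℕ) (S : Set ℝ) : Set ℝ := {x | ∃ y ∈ S, ⌊x * 2 ^ L⌋ = ⌊y * 2 ^ L⌋}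

lemma floor_mul_two_pow_eq_of_le {l L : ℕ} (h : l ≤ L) {x y : ℝ}
    (hxy : ⌊x * 2 ^ L⌋ = ⌊y * 2 ^ L⌋) : ⌊x * 2 ^ l⌋ = ⌊y * 2 ^ l⌋ := by
  have key : ∀ z : ℝ, ⌊z * 2 ^ l⌋ = ⌊z * 2 ^ L⌋ / ((2 ^ (L - l) : ℕ) : ℤ) := by
    intro z
    rw [← Int.floor_div_natCast]
    congr 1
    obtain ⟨d, rfl⟩ := Nat.exists_eq_add_of_le h
    rw [Nat.add_sub_cancel_left, pow_add]
    push_cast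
    field_simp
  rw [key, key, hxy]

lemma IsDyadic.compl_dyadicHull {l L : ℕ} (h : l ≤ L) (S : Set ℝ) :
    IsDyadic L (dyadicHull l S)ᶜ := by
  rintro x y hxy hx ⟨z, hz, hyz⟩
  exact hx ⟨z, hz, (floor_mul_two_pow_eq_of_le h hxy).trans hyz⟩

lemma subset_dyadicHull (L : ℕ) (S : Set ℝ) : S ⊆ dyadicHull L S := fun x hx => ⟨x, hx, rfl⟩

lemma dyadicHull_nearInt_subset {L : ℕ} {t η δ : ℝ} (ht : 0 < t) (hL : t ≤ δ * 2 ^ L) :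
    dyadicHull L (nearInt t η δ) ⊆ nearInt t η (2 * δ) := by
  rintro x ⟨y, ⟨m, hm⟩, hxy⟩
  refine ⟨m, ?_⟩
  have h1 := Int.abs_sub_lt_one_of_floor_eq_floor hxy
  have h2 : |x - y| * t < δ := by
    rw [← sub_mul, abs_mul, abs_of_pos (by positivity : (0 : ℝ) < 2 ^ L)] at h1
    have hp : (0 : ℝ) < 2 ^ L := by positivity
    have hδ : 0 < δ := by
      by_contra! hδ
      nlinarith
    calc |x - y| * t ≤ |x - y| * (δ * 2 ^ L) := by gcongr
      _ = δ * (|x - y| * 2 ^ L) := by ring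
      _ < δ * 1 := by gcongr
      _ = δ := mul_one δ
  calc |x * t - η - m| = |(x - y) * t + (y * t - η - m)| := by ring_nf
    _ ≤ |(x - y) * t| + |y * t - η - m| := abs_add_le _ _
    _ = |x - y| * t + |y * t - η - m| := by rw [abs_mul, abs_of_pos ht]
    _ < 2 * δ := by linarith

lemma volume_Ico_inter_nearInt_le {t η ε u w : ℝ} (ht : 0 < t) (hw : 1 ≤ w * t)
    (hε : 0 ≤ ε) (hε' : ε ≤ 1 / 2) :
    MeasureTheory.volume (Set.Ico u (u + w) ∩ nearInt t η ε) ≤ ENNReal.ofReal (6 * ε * w) := by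
  set J := Finset.Icc ⌈u * t - η - ε⌉ ⌊(u + w) * t - η + ε⌋ with hJ
  have hsub : Set.Ico u (u + w) ∩ nearInt t η ε ⊆
      ⋃ m ∈ J, Set.Icc ((η + m - ε) / t) ((η + m + ε) / t) := by
    rintro x ⟨⟨hx1, hx2⟩, m, hm⟩
    rw [abs_lt] at hm
    have h1 : u * t ≤ x * t := by gcongr
    have h2 : x * t ≤ (u + w) * t := by gcongr
    simp only [Set.mem_iUnion]
    refine ⟨m, ?_, ?_, ?_⟩
    · rw [hJ, Finset.mem_Icc, Int.ceil_le, Int.le_floor]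
      constructor <;> linarith
    · rw [div_le_iff₀ ht]; linarith
    · rw [le_div_iff₀ ht]; linarith
  have hcard : (J.card : ℝ) ≤ w * t + 2 := by
    rw [hJ, Int.card_Icc]
    have h0 : (0 : ℝ) ≤ w * t + 2 := by linarith
    have h1 := Int.floor_le ((u + w) * t - η + ε)
    have h2 := Int.le_ceil (u * t - η - ε)
    set a := ⌊(u + w) * t - η + ε⌋
    set b := ⌈u * t - η - ε⌉
    have h3 : (((a + 1 - b).toNat : ℤ) : ℝ) = max ((a : ℝ) + 1 - b) 0 := by
      rw [Int.toNat_eq_max]; push_cast; rfl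
    rw [← Int.cast_natCast, h3, max_le_iff]
    exact ⟨by linarith, h0⟩
  calc MeasureTheory.volume (Set.Ico u (u + w) ∩ nearInt t η ε)
      ≤ MeasureTheory.volume (⋃ m ∈ J, Set.Icc ((η + m - ε) / t) ((η + m + ε) / t)) :=
        MeasureTheory.measure_mono hsub
    _ ≤ ∑ m ∈ J, MeasureTheory.volume (Set.Icc ((η + m - ε) / t) ((η + m + ε) / t)) :=
        MeasureTheory.measure_biUnion_finset_le _ _
    _ = ∑ m ∈ J, ENNReal.ofReal (2 * ε / t) := by
        refine Finset.sum_congr rfl fun m _ => ?_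
        rw [Real.volume_Icc]
        congr 1
        ring
    _ = ENNReal.ofReal (J.card * (2 * ε / t)) := by
        rw [Finset.sum_const, nsmul_eq_mul, ENNReal.ofReal_mul (by positivity),
          ENNReal.ofReal_natCast]
    _ ≤ ENNReal.ofReal (6 * ε * w) := by
        apply ENNReal.ofReal_le_ofReal
        calc (J.card : ℝ) * (2 * ε / t) ≤ (3 * (w * t)) * (2 * ε / t) := by
              gcongr
              linarith
          _ = 6 * ε * w := by field_simp; ring

lemma setOf_floor_mul_eq (L : ℕ) (a : ℤ) :
    {x : ℝ | ⌊x * 2 ^ L⌋ = a} = Set.Ico (a / 2 ^ L : ℝ) (a / 2 ^ L + (2 ^ L)⁻¹) := by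
  ext x
  have hp : (0 : ℝ) < 2 ^ L := by positivity
  rw [Set.mem_ofPred_eq, Int.floor_eq_iff, Set.mem_Ico, div_le_iff₀ hp, ← one_div, ← add_div,
    lt_div_iff₀ hp]

lemma IsDyadic.volume_inter_nearInt_le {L : ℕ} {S : Set ℝ} (hS : IsDyadic L S) {t η ε : ℝ}
    (ht : 2 ^ L ≤ t) (hε : 0 ≤ ε) (hε' : ε ≤ 1 / 2) :
    MeasureTheory.volume (S ∩ nearInt t η ε) ≤
      ENNReal.ofReal (6 * ε) * MeasureTheory.volume S := by
  have hp : (0 : ℝ) < 2 ^ L := by positivity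
  set I : ℤ → Set ℝ := fun a => {x : ℝ | ⌊x * 2 ^ L⌋ = a} with hI
  have hunion : ⋃ a, I a = Set.univ := by
    ext x; simp [hI]
  have hmeas : ∀ a, MeasurableSet (I a) := by
    intro a
    simp only [hI, setOf_floor_mul_eq]
    exact measurableSet_Ico
  have hdisj : Pairwise (Function.onFun Disjoint I) := by
    intro a b hab
    refine Set.disjoint_left.2 fun x hx hx' => hab ?_
    exact hx.symm.trans hx'
  have hsum : ∑' a, MeasureTheory.volume (I a ∩ S) = MeasureTheory.volume S := by
    rw [← MeasureTheory.Measure.restrict_apply_univ S, ← hunion,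
      MeasureTheory.measure_iUnion hdisj hmeas]
    exact tsum_congr fun a => (MeasureTheory.Measure.restrict_apply (hmeas a)).symm
  have hcell : ∀ a, MeasureTheory.volume (I a ∩ (S ∩ nearInt t η ε)) ≤
      ENNReal.ofReal (6 * ε) * MeasureTheory.volume (I a ∩ S) := by
    intro a
    rcases (I a ∩ S).eq_empty_or_nonempty with h | ⟨x, hx, hxS⟩
    · rw [← Set.inter_assoc, h]
      simp
    · have hsub : I a ⊆ S := fun y hy => hS x y (hx.trans hy.symm) hxS
      rw [← Set.inter_assoc, Set.inter_eq_left.2 hsub]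
      simp only [hI, setOf_floor_mul_eq]
      refine (volume_Ico_inter_nearInt_le (hp.trans_le ht) ?_ hε hε').trans_eq ?_
      · rw [inv_mul_eq_div, one_le_div hp]
        exact ht
      · rw [Real.volume_Ico, add_sub_cancel_left, ENNReal.ofReal_mul (by positivity)]
  calc MeasureTheory.volume (S ∩ nearInt t η ε)
      = MeasureTheory.volume (⋃ a, I a ∩ (S ∩ nearInt t η ε)) := by
        rw [← Set.iUnion_inter, hunion, Set.univ_inter]
    _ ≤ ∑' a, MeasureTheory.volume (I a ∩ (S ∩ nearInt t η ε)) :=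
        MeasureTheory.measure_iUnion_le _
    _ ≤ ∑' a, ENNReal.ofReal (6 * ε) * MeasureTheory.volume (I a ∩ S) :=
        ENNReal.tsum_le_tsum hcell
    _ = ENNReal.ofReal (6 * ε) * MeasureTheory.volume S := by
        rw [ENNReal.tsum_mul_left, hsum]

lemma pos_of_delayed_decay {p : ℕ → ℝ} {c : ℝ} {h : ℕ} (h0 : 0 < p 0) (hc : 0 ≤ c)
    (hc1 : c ≤ 1 / 4) (hch : c * h ≤ 1 / 4) (hp : ∀ k, p k - c * p (k - h) ≤ p (k + 1)) (n : ℕ) :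
    0 < p n := by
  have hr : (1 : ℝ) / 2 ≤ (1 - 2 * c) ^ h := by
    have := one_add_mul_le_pow (a := -(2 * c)) (by linarith) h
    rw [← sub_eq_add_neg] at this
    linarith
  have hr0 : 0 < 1 - 2 * c := by linarith
  have key : 0 < p n ∧ ∀ j, p (n - j) * (1 - 2 * c) ^ j ≤ p n := by
    induction n with
    | zero =>
      refine ⟨h0, fun j => ?_⟩
      rw [Nat.zero_sub]
      exact mul_le_of_le_one_right h0.le (pow_le_one₀ hr0.le (by linarith))
    | succ n ih =>
      obtain ⟨hpos, ih⟩ := ih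
      have hdelay : p (n - h) ≤ 2 * p n := by
        have := ih h
        by_contra! hlt
        nlinarith
      have hstep : p n * (1 - 2 * c) ≤ p (n + 1) := by nlinarith [hp n]
      refine ⟨(mul_pos hpos hr0).trans_le hstep, fun j => ?_⟩
      cases j with
      | zero => simp
      | succ j =>
        rw [Nat.succ_sub_succ, pow_succ, ← mul_assoc]
        exact (mul_le_mul_of_nonneg_right (ih j) hr0.le).trans hstep
  exact key.1

lemma exists_forall_not_mem_nearInt {δ : ℝ} {h : ℕ} (hδ : 0 < δ) (hδ' : δ ≤ 1 / 48)
    (hδh : δ * h ≤ 1 / 48) {t : ℕ → ℝ} (ht : ∀ i, 1 ≤ t i)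
    (hsep : ∀ i k, i + h < k → 2 * t i / δ ≤ t k) (η : ℕ → ℝ) :
    ∃ x : ℝ, ∀ j, x ∉ nearInt (t j) (η j) δ := by
  have hlevel : ∀ i, ∃ l : ℕ, t i ≤ δ * 2 ^ l ∧ (2 : ℝ) ^ l ≤ 2 * t i / δ := by
    intro i
    have h1 : 1 ≤ t i / δ := by
      rw [one_le_div hδ]
      linarith [ht i]
    obtain ⟨n, hn1, hn2⟩ := exists_nat_pow_near h1 (one_lt_two : (1 : ℝ) < 2)
    refine ⟨n + 1, ?_, ?_⟩
    · rw [div_lt_iff₀ hδ] at hn2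
      linarith
    · rw [pow_succ, mul_div_assoc]
      linarith
  choose l hl1 hl2 using hlevel
  set A : ℕ → Set ℝ := fun i => dyadicHull (l i) (nearInt (t i) (η i) δ) with hA
  set G : ℕ → Set ℝ := fun n => {x | ⌊x⌋ = 0 ∧ ∀ i < n, x ∈ (A i)ᶜ} with hG
  have hGdyadic : ∀ n T, 1 ≤ T → (∀ i < n, 2 * t i / δ ≤ T) →
      ∃ L : ℕ, (2 : ℝ) ^ L ≤ T ∧ IsDyadic L (G n) := by
    intro n T hT hn
    obtain ⟨L, hL1, hL2⟩ := exists_nat_pow_near hT (one_lt_two : (1 : ℝ) < 2)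
    refine ⟨L, hL1, ?_⟩
    rintro x y hxy ⟨hx0, hx⟩
    refine ⟨?_, fun i hi => ?_⟩
    · have := floor_mul_two_pow_eq_of_le (Nat.zero_le L) hxy
      simp only [pow_zero, mul_one] at this
      rw [← this, hx0]
    · have hlt : (2 : ℝ) ^ l i < 2 ^ (L + 1) := ((hl2 i).trans (hn i hi)).trans_lt hL2
      have hle : l i ≤ L := Nat.lt_succ_iff.1 ((pow_lt_pow_iff_right₀ one_lt_two).1 hlt)
      exact IsDyadic.compl_dyadicHull hle _ x y hxy (hx i hi)
  have hGIco : ∀ n, G n ⊆ Set.Ico 0 1 := by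
    rintro n x ⟨hx, -⟩
    simpa using Int.floor_eq_iff.1 hx
  have hGfin : ∀ n, MeasureTheory.volume (G n) ≠ ⊤ := fun n =>
    ((MeasureTheory.measure_mono (hGIco n)).trans_lt (by simp)).ne
  have hGpos : ∀ n, 0 < MeasureTheory.volume.real (G n) := by
    apply pos_of_delayed_decay (c := 12 * δ) (h := h) _ (by linarith) (by linarith)
      (by linarith)
    · intro k
      obtain ⟨L, hL, hdy⟩ := hGdyadic (k - h) (t k) (ht k)
        (fun i hi => hsep i k (by omega))
      have hbound := hdy.volume_inter_nearInt_le (η := η k) (ε := 2 * δ) hL (by linarith)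
        (by linarith)
      have hreal : MeasureTheory.volume.real (G (k - h) ∩ nearInt (t k) (η k) (2 * δ)) ≤
          12 * δ * MeasureTheory.volume.real (G (k - h)) := by
        have := ENNReal.toReal_mono (ENNReal.mul_ne_top ENNReal.ofReal_ne_top (hGfin _)) hbound
        rw [ENNReal.toReal_mul, ENNReal.toReal_ofReal (by linarith)] at this
        rw [MeasureTheory.measureReal_def, MeasureTheory.measureReal_def]
        linarith
      have hsub : G k ⊆ G (k + 1) ∪ (G (k - h) ∩ nearInt (t k) (η k) (2 * δ)) := by
        rintro x ⟨hx0, hx⟩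
        by_cases hxk : x ∈ A k
        · refine Or.inr ⟨⟨hx0, fun i hi => hx i (by omega)⟩, ?_⟩
          exact dyadicHull_nearInt_subset (zero_lt_one.trans_le (ht k)) (hl1 k) hxk
        · refine Or.inl ⟨hx0, fun i hi => ?_⟩
          rcases Nat.lt_succ_iff_lt_or_eq.1 hi with hi | rfl
          · exact hx i hi
          · exact hxk
      have h1 := MeasureTheory.measureReal_mono (μ := MeasureTheory.volume) hsub
        (MeasureTheory.measure_union_ne_top (hGfin _)
          (MeasureTheory.measure_ne_top_of_subset Set.inter_subset_left (hGfin _)))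
      have h2 := MeasureTheory.measureReal_union_le (μ := MeasureTheory.volume) (G (k + 1))
        (G (k - h) ∩ nearInt (t k) (η k) (2 * δ))
      linarith
    · have : G 0 = Set.Ico 0 1 := by
        ext x
        simp [hG, Int.floor_eq_iff]
      rw [this]
      simp
  have hclosed : ∀ j, IsClosed (nearInt (t j) (η j) δ)ᶜ := by
    intro j
    have : (nearInt (t j) (η j) δ)ᶜ = ⋂ m : ℤ, {x : ℝ | δ ≤ |x * t j - η j - m|} := by
      ext x
      simp [nearInt]
    rw [this]
    exact isClosed_iInter fun m => isClosed_le continuous_const (by fun_prop)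
  set F : ℕ → Set ℝ := fun n => Set.Icc 0 1 ∩ ⋂ i, ⋂ (_ : i < n), (nearInt (t i) (η i) δ)ᶜ
    with hF
  have hFclosed : ∀ n, IsClosed (F n) := fun n =>
    isClosed_Icc.inter (isClosed_iInter fun i => isClosed_iInter fun _ => hclosed i)
  obtain ⟨x, hx⟩ := IsCompact.nonempty_iInter_of_sequence_nonempty_isCompact_isClosed F
    (fun n x hx => ⟨hx.1, Set.mem_iInter₂.2 fun i hi =>
      Set.mem_iInter₂.1 hx.2 i (hi.trans n.lt_succ_self)⟩)
    (fun n => by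
      obtain ⟨x, hx⟩ := MeasureTheory.nonempty_of_measureReal_ne_zero (hGpos n).ne'
      exact ⟨x, Set.Ico_subset_Icc_self (hGIco n hx), Set.mem_iInter₂.2 fun i hi hxi =>
        hx.2 i hi (subset_dyadicHull _ _ hxi)⟩)
    (isCompact_Icc.of_isClosed_subset (hFclosed 0) Set.inter_subset_left) hFclosed
  exact ⟨x, fun j => Set.mem_iInter₂.1 (Set.mem_iInter.1 hx (j + 1)).2 j j.lt_succ_self⟩

lemma pow_mul_le_of_le_ratio {t : ℕ → ℝ} {q : ℝ} (hq : 0 ≤ q) (hpos : ∀ j, 0 < t j)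
    (ht : ∀ j, q ≤ t (j + 1) / t j) (i d : ℕ) : q ^ d * t i ≤ t (i + d) := by
  induction d with
  | zero => simp
  | succ d ih =>
    have := (le_div_iff₀ (hpos _)).1 (ht (i + d))
    calc q ^ (d + 1) * t i = q * (q ^ d * t i) := by ring
      _ ≤ q * t (i + d) := by gcongr
      _ ≤ t (i + (d + 1)) := this

lemma pow_le_one_add_inv_pow {M : ℝ} (hM : 1 ≤ M) {n h : ℕ}
    (hh : 2 * n * (M * Real.log M) ≤ h) : M ^ n ≤ (1 + 1 / M) ^ h := by
  have hM0 : 0 < M := by linarith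
  have hlog : 1 / (2 * M) ≤ Real.log (1 + 1 / M) := by
    refine le_trans ?_ (Real.one_sub_inv_le_log_of_pos (by positivity))
    have : 1 - (1 + 1 / M)⁻¹ = 1 / (M + 1) := by
      field_simp
      ring
    rw [this]
    gcongr
    linarith
  rw [← Real.log_le_log_iff (by positivity) (by positivity), Real.log_pow, Real.log_pow]
  calc (n : ℝ) * Real.log M = 2 * n * (M * Real.log M) * (1 / (2 * M)) := by field_simp
    _ ≤ h * Real.log (1 + 1 / M) := by gcongr

/-- Dubickas' inhomogeneous version of the Peres–Schlag theorem. -/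
theorem stmt10 : ∃ γ' : ℝ, 0 < γ' ∧ ∀ M : ℝ, 2 ≤ M → ∀ t : ℕ → ℝ,
    (∀ j, 0 < t j) → (∀ j, 1 + 1 / M ≤ t (j + 1) / t j) → ∀ η : ℕ → ℝ,
    ∃ α : ℝ, ∀ j, γ' / (M * Real.log M) ≤ nint (α * t j - η j) := by
  refine ⟨1 / 2048, by norm_num, fun M hM t hpos hratio η => ?_⟩
  have hM0 : 0 < M := by linarith
  have hlog2 : 1 / 2 ≤ Real.log M := by
    have := Real.log_le_log two_pos hM
    linarith [Real.log_two_gt_d9]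
  have hX : 1 ≤ M * Real.log M := by nlinarith
  have hXM : M * Real.log M ≤ M ^ 2 := by
    nlinarith [Real.log_le_sub_one_of_pos hM0]
  set X := M * Real.log M with hXdef
  set h : ℕ := ⌈28 * X⌉₊ with hh
  have hle : 28 * X ≤ h := Nat.le_ceil _
  have hlt : (h : ℝ) < 28 * X + 1 := Nat.ceil_lt_add_one (by positivity)
  have hq : 1 ≤ 1 + 1 / M := by
    have : 0 < 1 / M := by positivity
    linarith
  have hgrow : 2 / (1 / 2048 / X) ≤ (1 + 1 / M) ^ h := by
    refine le_trans ?_ (pow_le_one_add_inv_pow (n := 14) (by linarith) (by push_cast; linarith))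
    calc 2 / (1 / 2048 / X) = 2 ^ 12 * X := by
          field_simp
          norm_num
      _ ≤ M ^ 12 * M ^ 2 := by gcongr
      _ = M ^ 14 := by ring
  obtain ⟨x, hx⟩ := exists_forall_not_mem_nearInt (δ := 1 / 2048 / X) (h := h)
    (by positivity)
    (by rw [div_le_iff₀ (by linarith)]; linarith)
    (by rw [div_mul_eq_mul_div, div_le_iff₀ (by linarith)]; linarith)
    (t := fun i => t i / t 0)
    (fun i => by
      rw [one_le_div (hpos 0)]
      have := pow_mul_le_of_le_ratio (by linarith) hpos hratio 0 i
      rw [zero_add] at this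
      exact (le_mul_of_one_le_left (hpos 0).le (one_le_pow₀ hq)).trans this)
    (fun i k hik => by
      obtain ⟨d, rfl⟩ := Nat.exists_eq_add_of_le (show i ≤ k by omega)
      have h1 := pow_mul_le_of_le_ratio (by linarith) hpos hratio i d
      have h2 : (1 + 1 / M) ^ h ≤ (1 + 1 / M) ^ d := pow_le_pow_right₀ hq (by omega)
      have h3 : 2 / (1 / 2048 / X) * t i ≤ t (i + d) :=
        (mul_le_mul_of_nonneg_right (hgrow.trans h2) (hpos i).le).trans h1
      calc 2 * (t i / t 0) / (1 / 2048 / X) = 2 / (1 / 2048 / X) * t i / t 0 := by ring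
        _ ≤ t (i + d) / t 0 := div_le_div_of_nonneg_right h3 (hpos 0).le)
    η
  refine ⟨x / t 0, fun j => ?_⟩
  by_contra! hj
  refine hx j ⟨round (x / t 0 * t j - η j), ?_⟩
  have : x * (t j / t 0) = x / t 0 * t j := by ring
  rw [this]
  exact hj
end
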